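/- Let ω ≥ 1 be an integer and δ ∈ (0,1/8) be fixed, and let η > 0. The double series Ω₁(s) = (2 sin(πs)/π) · Σ_{k≥1} Σ_{j≥0} ((s)_j/(j!·4^j)) · (kω)^{-(2s+2j+1)} · ∫_{k^{δ-1}/ω}^{∞} u^{-2s-2j} · A₁(u) du converges absolutely and locally uniformly on the strip {s ∈ ℂ : 1 < Re(s) < 2}, and its sum extends holomorphically to a neighborhood of s = 0; moreover, for fixed ω and δ, as η → 0⁺ one has Ω₁(0) → 1/(6ω) and Ω₁'(0) - (γ/(3ω) + 1/(3ω) - (log 2)/(3ω) - (log ω)/(3ω) + (log η)/(3ω)) → 0. -/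

import Mathlib

open MeasureTheory Filter

/-- The Pochhammer symbol `(s)_j = s(s+1)⋯(s+j-1)`. -/
noncomputable def pochSym (s : ℂ) (j : ℕ) : ℂ := ∏ i ∈ Finset.range j, (s + i)

/-- `A₁(u) = ((5 - cosh(η)²)·cosh(η)·sinh(η)²/8) · u·(1 + u²sinh(η)²)^{-5/2}`. -/
noncomputable def coneA1 (η u : ℝ) : ℝ :=
  ((5 - Real.cosh η ^ 2) * Real.cosh η * Real.sinh η ^ 2 / 8) *
    (u * (1 + u ^ 2 * Real.sinh η ^ 2) ^ (-(5 : ℝ) / 2))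

/-- The `(k,j)`-term of the double series `Ω₁(s)`:
`(2 sin(πs)/π) · ((s)_j/(j!·4^j)) · (kω)^{-(2s+2j+1)} · ∫_{k^{δ-1}/ω}^∞ u^{-2s-2j}·A₁(u) du`. -/
noncomputable def Omega1Term (ω : ℕ) (η δ : ℝ) (k j : ℕ) (s : ℂ) : ℂ :=
  (2 * Complex.sin ((Real.pi : ℂ) * s) / (Real.pi : ℂ)) *
    (pochSym s j / ((Nat.factorial j : ℂ) * 4 ^ j)) *
    (((k : ℝ) * (ω : ℝ) : ℝ) : ℂ) ^ (-(2 * s + 2 * (j : ℂ) + 1)) *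
    ∫ u in Set.Ioi ((k : ℝ) ^ (δ - 1) / ω),
      (u : ℂ) ^ (-(2 * s) - 2 * (j : ℂ)) * ((coneA1 η u : ℝ) : ℂ)

/-!
Write `A₁(u) = A · u · f(u)` with `f(u) = (1 + u² sinh² η)^{-5/2}`. The `(k, j)` term is then
`sin(πs)` times the Pochhammer coefficient `(s)_j / (j! 4^j)` times, up to a constant, the value at
`z = s + j` of `(kω)^{-(2z+1)} ∫_{u > c_k} u^{1-2z} f(u) du`, where `c_k = k^{δ-1}/ω`. These tail
terms, summed over `k`, converge normally for `Re z > 0`, so the terms with `j ≥ 1` are holomorphic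
near `s = 0` and vanish there to second order, `(s)_j` and `sin(πs)` both being zero at `s = 0`.

For `j = 0` write each tail as the full Mellin transform `M(z) = ∫_0^∞ u^{1-2z} f(u) du` minus the
head `∫_0^{c_k}`. The full transforms sum to `M(z) ζ(2z+1) ω^{-(2z+1)}`. The Taylor expansion of `f`
in powers of `u²` turns the sum of the heads into zeta values plus a remainder holomorphic on a
strip reaching as far to the left as desired, so everything continues meromorphically to `ℂ`. At
`s = 0` the zero of `sin(πs)` cancels the pole of `ζ(2s+1)`, hence only `M(0)`, `M'(0)` and the head
sum at `0` matter. Since `f` is a Beta kernel, `M` is a quotient of Gamma functions and `M'(0)`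
involves the digamma function at `3/2`. The head sum at `0` is bounded uniformly in `η`, and its
coefficient `A` tends to `0` with `η`.
-/

open Set Asymptotics Complex
open scoped Topology

section MeromorphicContinuation

theorem eventuallyEq_nhdsNE_of_isPreconnected {𝕜 E : Type*} [NontriviallyNormedField 𝕜]
    [NormedAddCommGroup E] [NormedSpace 𝕜 E] {f g : 𝕜 → E} {U : Set 𝕜} {x y : 𝕜}
    (hf : MeromorphicOn f U) (hg : MeromorphicOn g U) (hU : IsPreconnected U)
    (hx : x ∈ U) (hy : y ∈ U) (h : f =ᶠ[𝓝[≠] x] g) : f =ᶠ[𝓝[≠] y] g := by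
  have sub_eq_top_iff (z : 𝕜) : meromorphicOrderAt (f - g) z = ⊤ ↔ f =ᶠ[𝓝[≠] z] g := by
    simp only [meromorphicOrderAt_eq_top_iff, Pi.sub_apply, sub_eq_zero, EventuallyEq]
  rw [← sub_eq_top_iff] at h ⊢
  by_contra hne
  exact (hf.sub hg).meromorphicOrderAt_ne_top_of_isPreconnected hU hy hx hne h

variable {f : ℂ → ℂ}

theorem isOpen_re_strip (a b : ℝ) : IsOpen {s : ℂ | a < s.re ∧ s.re < b} :=
  (isOpen_re_gt a).inter (isOpen_lt continuous_re continuous_const)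

theorem isPreconnected_re_strip (a b : ℝ) : IsPreconnected {s : ℂ | a < s.re ∧ s.re < b} :=
  ((convex_halfSpace_re_gt a).inter (convex_halfSpace_re_lt b)).isPreconnected

theorem exists_meromorphicNFOn_halfPlane {a b : ℝ} (ha : a ≤ 0) (hb : 0 < b)
    (hf : DifferentiableOn ℂ f {s | 0 < s.re}) {g : ℂ → ℂ}
    (hg : MeromorphicOn g {s | a < s.re ∧ s.re < b})
    (hgf : EqOn g f {s | 0 < s.re ∧ s.re < b}) :
    ∃ K, MeromorphicNFOn K {s | a < s.re} ∧ EqOn K f {s | 0 < s.re} := by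
  classical
  set h : ℂ → ℂ := {s : ℂ | 0 < s.re}.piecewise f g
  have hhf : EqOn h f {s | 0 < s.re} := piecewise_eqOn _ f g
  have hf_an (s : ℂ) (hs : 0 < s.re) : AnalyticAt ℂ f s :=
    hf.analyticAt ((isOpen_re_gt 0).mem_nhds hs)
  have hhf_nhds (s : ℂ) (hs : 0 < s.re) : h =ᶠ[𝓝 s] f :=
    hhf.eventuallyEq_of_mem ((isOpen_re_gt 0).mem_nhds hs)
  have hh : MeromorphicOn h {s | a < s.re} := fun s hs ↦ by
    rcases lt_or_ge 0 s.re with hs0 | hs0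
    · exact (hf_an s hs0).meromorphicAt.congr ((hhf_nhds s hs0).symm.filter_mono nhdsWithin_le_nhds)
    · have hsb : s ∈ {s : ℂ | a < s.re ∧ s.re < b} := ⟨hs, hs0.trans_lt hb⟩
      refine (hg s hsb).congr (EventuallyEq.filter_mono ?_ nhdsWithin_le_nhds)
      filter_upwards [(isOpen_re_strip a b).mem_nhds hsb] with w hw
      by_cases hw0 : 0 < w.re
      · exact (hgf ⟨hw0, hw.2⟩).trans (hhf hw0).symm
      · exact (piecewise_eq_of_notMem {s : ℂ | 0 < s.re} f g hw0).symm
  refine ⟨toMeromorphicNFOn h {s | a < s.re}, meromorphicNFOn_toMeromorphicNFOn _ _,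
    fun s (hs : 0 < s.re) ↦ ?_⟩
  have has : s ∈ {s : ℂ | a < s.re} := ha.trans_lt hs
  have heq : toMeromorphicNFOn h {s | a < s.re} =ᶠ[𝓝[≠] s] f :=
    (hh.toMeromorphicNFOn_eq_self_on_nhdsNE has).trans
      ((hhf_nhds s hs).filter_mono nhdsWithin_le_nhds)
  exact (((meromorphicNFOn_toMeromorphicNFOn h _ has).eventuallyEq_nhdsNE_iff_eventuallyEq_nhds
    (hf_an s hs).meromorphicNFAt).1 heq).eq_of_nhds

theorem eqOn_of_meromorphicNFOn_halfPlane {a b : ℝ} {K L : ℂ → ℂ}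
    (hK : MeromorphicNFOn K {s | a < s.re}) (hL : MeromorphicNFOn L {s | b < s.re})
    (hKf : EqOn K f {s | 0 < s.re}) (hLf : EqOn L f {s | 0 < s.re}) :
    EqOn K L {s | max a b < s.re} := by
  intro s (hs : max a b < s.re)
  obtain ⟨has, hbs⟩ := max_lt_iff.1 hs
  set x : ℂ := ((max (max a b) 0 + 1 : ℝ) : ℂ)
  have hx : x.re = max (max a b) 0 + 1 := ofReal_re _
  have hx0 : 0 < x.re := by rw [hx]; positivity
  have hxab : max a b < x.re := by rw [hx]; exact (le_max_left _ _).trans_lt (lt_add_one _)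
  have hKLx : K =ᶠ[𝓝[≠] x] L :=
    ((hKf.trans hLf.symm).eventuallyEq_of_mem ((isOpen_re_gt 0).mem_nhds hx0)).filter_mono
      nhdsWithin_le_nhds
  have hKLs := eventuallyEq_nhdsNE_of_isPreconnected
    (hK.meromorphicOn.mono_set fun w (hw : max a b < w.re) ↦ (max_lt_iff.1 hw).1)
    (hL.meromorphicOn.mono_set fun w (hw : max a b < w.re) ↦ (max_lt_iff.1 hw).2)
    (convex_halfSpace_re_gt _).isPreconnected hxab hs hKLx
  exact (((hK has).eventuallyEq_nhdsNE_iff_eventuallyEq_nhds (hL hbs)).1 hKLs).eq_of_nhds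

theorem exists_meromorphic_of_strip {b : ℝ} (hb : 0 < b)
    (hf : DifferentiableOn ℂ f {s | 0 < s.re})
    (hext : ∀ n : ℕ, ∃ g, MeromorphicOn g {s | -(n : ℝ) < s.re ∧ s.re < b} ∧
      EqOn g f {s | 0 < s.re ∧ s.re < b}) :
    ∃ F, Meromorphic F ∧ EqOn F f {s | 0 < s.re} := by
  have hchoice (n : ℕ) : ∃ K, MeromorphicNFOn K {s | -(n : ℝ) < s.re} ∧
      EqOn K f {s | 0 < s.re} := by
    obtain ⟨g, hg, hgf⟩ := hext n
    exact exists_meromorphicNFOn_halfPlane (neg_nonpos.2 n.cast_nonneg) hb hf hg hgf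
  choose K hK hKf using hchoice
  have hfloor (s : ℂ) : -((⌊-s.re⌋₊ + 1 : ℕ) : ℝ) < s.re := by
    push_cast
    linarith [Nat.lt_floor_add_one (-s.re)]
  have hglue (n : ℕ) : EqOn (fun s ↦ K (⌊-s.re⌋₊ + 1) s) (K n) {s | -(n : ℝ) < s.re} := fun s hs ↦
    eqOn_of_meromorphicNFOn_halfPlane (hK _) (hK n) (hKf _) (hKf n) (max_lt (hfloor s) hs)
  refine ⟨fun s ↦ K (⌊-s.re⌋₊ + 1) s, fun s ↦ ?_, fun s hs ↦ hKf _ hs⟩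
  exact ((meromorphicNFAt_congr ((hglue _).eventuallyEq_of_mem
    ((isOpen_re_gt _).mem_nhds (hfloor s)))).2 (hK _ (hfloor s))).meromorphicAt

end MeromorphicContinuation

section TruncatedMellin

variable {E : Type*} [NormedAddCommGroup E] {f : ℝ → E} {a b c C : ℝ} {s : ℂ}

theorem isBigO_indicator_Ioi_nhdsGT_zero (ha : 0 < a) (g : ℝ → ℝ) :
    (Ioi a).indicator f =O[𝓝[>] 0] g := by
  refine EventuallyEq.trans_isBigO ?_ (isBigO_zero (E' := E) g _)
  filter_upwards [nhdsWithin_le_nhds (eventually_lt_nhds ha)] with u hu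
  exact indicator_of_notMem (notMem_Ioi.2 hu.le) f

theorem isBigO_indicator_Iic_atTop (g : ℝ → ℝ) : (Iic a).indicator f =O[atTop] g := by
  refine EventuallyEq.trans_isBigO ?_ (isBigO_zero (E' := E) g _)
  filter_upwards [eventually_gt_atTop a] with u hu
  exact indicator_of_notMem (notMem_Iic.2 hu) f

theorem isBigO_indicator_Iic_nhdsGT_zero (ha : 0 < a)
    (hfb : ∀ u ∈ Ioc 0 a, ‖f u‖ ≤ C * u ^ b) :
    (Iic a).indicator f =O[𝓝[>] 0] (· ^ (- -b)) := by
  refine IsBigO.of_bound C ?_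
  filter_upwards [Ioc_mem_nhdsGT ha] with u hu
  rw [neg_neg, indicator_of_mem (mem_Iic.2 hu.2), Real.norm_of_nonneg (Real.rpow_nonneg hu.1.le b)]
  exact hfb u hu

theorem isBigO_indicator_atTop (A : Set ℝ) (hfc : f =O[atTop] (· ^ (-c))) :
    A.indicator f =O[atTop] (· ^ (-c)) :=
  (IsBigO.of_norm_le fun _ ↦ norm_indicator_le_norm_self f _).trans hfc.norm_left

variable [NormedSpace ℂ E]

theorem mellinConvergent_indicator_Ioi (hf : LocallyIntegrable f) (ha : 0 < a)
    (hfc : f =O[atTop] (· ^ (-c))) (hs : s.re < c) : MellinConvergent ((Ioi a).indicator f) s :=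
  mellinConvergent_of_isBigO_rpow ((hf.indicator measurableSet_Ioi).locallyIntegrableOn _)
    (isBigO_indicator_atTop _ hfc) hs
    (isBigO_indicator_Ioi_nhdsGT_zero ha _) (sub_one_lt s.re)

theorem differentiableAt_mellin_indicator_Ioi (hf : LocallyIntegrable f) (ha : 0 < a)
    (hfc : f =O[atTop] (· ^ (-c))) (hs : s.re < c) :
    DifferentiableAt ℂ (mellin ((Ioi a).indicator f)) s :=
  mellin_differentiableAt_of_isBigO_rpow ((hf.indicator measurableSet_Ioi).locallyIntegrableOn _)
    (isBigO_indicator_atTop _ hfc) hs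
    (isBigO_indicator_Ioi_nhdsGT_zero ha _) (sub_one_lt s.re)

theorem mellinConvergent_indicator_Iic (hf : LocallyIntegrable f) (ha : 0 < a)
    (hfb : ∀ u ∈ Ioc 0 a, ‖f u‖ ≤ C * u ^ b) (hs : -b < s.re) :
    MellinConvergent ((Iic a).indicator f) s :=
  mellinConvergent_of_isBigO_rpow ((hf.indicator measurableSet_Iic).locallyIntegrableOn _)
    (isBigO_indicator_Iic_atTop _) (lt_add_one s.re) (isBigO_indicator_Iic_nhdsGT_zero ha hfb) hs

theorem differentiableAt_mellin_indicator_Iic (hf : LocallyIntegrable f) (ha : 0 < a)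
    (hfb : ∀ u ∈ Ioc 0 a, ‖f u‖ ≤ C * u ^ b) (hs : -b < s.re) :
    DifferentiableAt ℂ (mellin ((Iic a).indicator f)) s :=
  mellin_differentiableAt_of_isBigO_rpow ((hf.indicator measurableSet_Iic).locallyIntegrableOn _)
    (isBigO_indicator_Iic_atTop _) (lt_add_one s.re) (isBigO_indicator_Iic_nhdsGT_zero ha hfb) hs

theorem mellin_indicator_Iic_eq_setIntegral :
    mellin ((Iic a).indicator f) s = ∫ u : ℝ in Ioc 0 a, (u : ℂ) ^ (s - 1) • f u := by
  simp only [mellin, ← indicator_smul]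
  rw [setIntegral_indicator measurableSet_Iic, Ioi_inter_Iic]

theorem mellin_indicator_Ioi_eq_setIntegral (ha : 0 ≤ a) :
    mellin ((Ioi a).indicator f) s = ∫ u : ℝ in Ioi a, (u : ℂ) ^ (s - 1) • f u := by
  simp only [mellin, ← indicator_smul]
  rw [setIntegral_indicator measurableSet_Ioi, Ioi_inter_Ioi, sup_of_le_right ha]

theorem mellin_eq_indicator_Ioi_add_indicator_Iic
    (hhead : MellinConvergent ((Iic a).indicator f) s)
    (htail : MellinConvergent ((Ioi a).indicator f) s) :
    mellin f s = mellin ((Ioi a).indicator f) s + mellin ((Iic a).indicator f) s := by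
  rw [← (hasMellin_add htail hhead).2, ← compl_Ioi]
  exact congrArg (mellin · s) (indicator_self_add_compl (Ioi a) f).symm

theorem norm_mellin_indicator_Ioi_le {σ : ℝ} (hf : MellinConvergent f σ) (ha : 0 < a)
    (hs : s.re ≤ σ) :
    ‖mellin ((Ioi a).indicator f) s‖ ≤ a ^ (s.re - σ) * ∫ u in Ioi 0, u ^ (σ - 1) * ‖f u‖ := by
  have norm_integrand (τ : ℂ) {u : ℝ} (hu : 0 < u) (x : E) :
      ‖(u : ℂ) ^ (τ - 1) • x‖ = u ^ (τ.re - 1) * ‖x‖ := by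
    rw [norm_smul, norm_cpow_eq_rpow_re_of_pos hu, sub_re, one_re]
  have hint : IntegrableOn (fun u : ℝ ↦ u ^ (σ - 1) * ‖f u‖) (Ioi 0) :=
    IntegrableOn.congr_fun hf.norm (fun u hu ↦ norm_integrand σ hu (f u)) measurableSet_Ioi
  rw [mellin, ← integral_const_mul]
  refine norm_integral_le_of_norm_le (hint.const_mul _) ?_
  filter_upwards [ae_restrict_mem measurableSet_Ioi] with u (hu : 0 < u)
  rw [norm_integrand s hu]
  by_cases hau : u ∈ Ioi a
  · rw [indicator_of_mem hau, ← mul_assoc]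
    gcongr
    calc u ^ (s.re - 1) = u ^ (s.re - σ) * u ^ (σ - 1) := by rw [← Real.rpow_add hu]; ring_nf
      _ ≤ a ^ (s.re - σ) * u ^ (σ - 1) := by
        exact mul_le_mul_of_nonneg_right
          (Real.rpow_le_rpow_of_nonpos ha (mem_Ioi.1 hau).le (sub_nonpos.2 hs)) (by positivity)
  · rw [indicator_of_notMem hau, norm_zero, mul_zero]
    positivity

theorem norm_mellin_indicator_Iic_le (ha : 0 < a)
    (hfb : ∀ u ∈ Ioc 0 a, ‖f u‖ ≤ C * u ^ b) (hs : 0 < s.re + b) :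
    ‖mellin ((Iic a).indicator f) s‖ ≤ C * a ^ (s.re + b) / (s.re + b) := by
  have hint : IntegrableOn (fun u : ℝ ↦ u ^ (s.re + b - 1)) (Ioc 0 a) :=
    (intervalIntegrable_iff_integrableOn_Ioc_of_le ha.le).1
      (intervalIntegral.intervalIntegrable_rpow' (by linarith))
  rw [mellin_indicator_Iic_eq_setIntegral]
  calc ‖∫ u : ℝ in Ioc 0 a, (u : ℂ) ^ (s - 1) • f u‖
      ≤ ∫ u in Ioc 0 a, C * u ^ (s.re + b - 1) := by
        refine norm_integral_le_of_norm_le (hint.const_mul C) ?_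
        filter_upwards [ae_restrict_mem measurableSet_Ioc] with u hu
        rw [norm_smul, norm_cpow_eq_rpow_re_of_pos hu.1, sub_re, one_re, add_sub_right_comm,
          Real.rpow_add hu.1, mul_left_comm]
        exact mul_le_mul_of_nonneg_left (hfb u hu) (Real.rpow_nonneg hu.1.le _)
    _ = C * a ^ (s.re + b) / (s.re + b) := by
        rw [integral_const_mul, ← intervalIntegral.integral_of_le ha.le,
          integral_rpow (.inl (by linarith)), sub_add_cancel, Real.zero_rpow hs.ne', sub_zero,
          mul_div_assoc]

theorem mellin_indicator_Iic_pow (n : ℕ) (ha : 0 ≤ a) (hs : 0 < (s + n).re) :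
    mellin ((Iic a).indicator fun u : ℝ ↦ (u : ℂ) ^ n) s = (a : ℂ) ^ (s + n) / (s + n) := by
  have hne : s + n ≠ 0 := fun h ↦ hs.ne' (by rw [h, zero_re])
  rw [mellin_indicator_Iic_eq_setIntegral]
  calc ∫ u : ℝ in Ioc 0 a, (u : ℂ) ^ (s - 1) • (u : ℂ) ^ n
      = ∫ u : ℝ in Ioc 0 a, (u : ℂ) ^ (s + n - 1) := by
        refine setIntegral_congr_fun measurableSet_Ioc fun u hu ↦ ?_
        have hu0 : (u : ℂ) ≠ 0 := ofReal_ne_zero.2 hu.1.ne'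
        simp only [smul_eq_mul]
        rw [add_sub_right_comm, cpow_add _ _ hu0, cpow_natCast]
    _ = (a : ℂ) ^ (s + n) / (s + n) := by
        rw [← intervalIntegral.integral_of_le ha, integral_cpow (.inl (by simpa using hs)),
          sub_add_cancel, ofReal_zero, zero_cpow hne, sub_zero]

end TruncatedMellin

section NormalConvergence

/-- Normal convergence on the right half-plane: each `T i` is holomorphic on `0 < re s`, and on
every closed half-plane `ε ≤ re s` with `0 < ε` the family is dominated by a summable one. -/
structure IsNormallySummable {ι : Type*} (T : ι → ℂ → ℂ) : Prop where
  differentiableOn (i : ι) : DifferentiableOn ℂ (T i) {s | 0 < s.re}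
  exists_bound {ε : ℝ} (hε : 0 < ε) :
    ∃ u : ι → ℝ, Summable u ∧ ∀ i s, ε ≤ s.re → ‖T i s‖ ≤ u i

variable {ι : Type*} {T : ι → ℂ → ℂ} {s : ℂ}

theorem IsNormallySummable.summable (hT : IsNormallySummable T) (hs : 0 < s.re) :
    Summable fun i ↦ T i s := by
  obtain ⟨u, hu, hTu⟩ := hT.exists_bound hs
  exact hu.of_norm_bounded fun i ↦ hTu i s le_rfl

theorem IsNormallySummable.differentiableOn_tsum (hT : IsNormallySummable T) :
    DifferentiableOn ℂ (fun s ↦ ∑' i, T i s) {s | 0 < s.re} := by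
  intro s (hs : 0 < s.re)
  obtain ⟨u, hu, hTu⟩ := hT.exists_bound (half_pos hs)
  have hsub : {w : ℂ | s.re / 2 < w.re} ⊆ {w | 0 < w.re} := fun w hw ↦ (half_pos hs).trans hw
  have hdiff := differentiableOn_tsum_of_summable_norm hu
    (fun i ↦ (hT.differentiableOn i).mono hsub) (isOpen_re_gt _) fun i w hw ↦ hTu i w (le_of_lt hw)
  exact (hdiff.differentiableAt ((isOpen_re_gt _).mem_nhds (half_lt_self hs)))
    |>.differentiableWithinAt

end NormalConvergence

section ConeSums

/-- The lower limit `k^{δ-1}/ω` of the `k`-th integral; throughout, the index `k` of the paper is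
`k + 1` here. -/
noncomputable def cutoff (ω δ : ℝ) (k : ℕ) : ℝ := ((k : ℝ) + 1) ^ (δ - 1) / ω

/-- The power `(kω)^{-(2z+1)}`. -/
noncomputable def weight (ω : ℝ) (k : ℕ) (z : ℂ) : ℂ :=
  ((((k : ℝ) + 1) * ω : ℝ) : ℂ) ^ (-(2 * z + 1))

/-- `(kω)^{-(2z+1)} ∫_{k^{δ-1}/ω}^∞ u^{1-2z} f(u) du`; the term `(k, j)` of `Ω₁(s)` is a multiple
of its value at `z = s + j`. -/
noncomputable def tailTerm (ω δ : ℝ) (f : ℝ → ℂ) (k : ℕ) (z : ℂ) : ℂ :=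
  weight ω k z * mellin ((Ioi (cutoff ω δ k)).indicator f) (2 - 2 * z)

/-- `(kω)^{-(2z+1)} ∫_0^{k^{δ-1}/ω} u^{1-2z} f(u) du`. -/
noncomputable def headTerm (ω δ : ℝ) (f : ℝ → ℂ) (k : ℕ) (z : ℂ) : ℂ :=
  weight ω k z * mellin ((Iic (cutoff ω δ k)).indicator f) (2 - 2 * z)

/-- The sum over `k` of the head terms. -/
noncomputable def headSum (ω δ : ℝ) (f : ℝ → ℂ) (z : ℂ) : ℂ := ∑' k, headTerm ω δ f k z

/-- The sum over `k` of the tail terms. -/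
noncomputable def tailSum (ω δ : ℝ) (f : ℝ → ℂ) (z : ℂ) : ℂ := ∑' k, tailTerm ω δ f k z

variable {ω δ : ℝ} {f : ℝ → ℂ}

theorem re_two_sub_two_mul (z : ℂ) : (2 - 2 * z).re = 2 - 2 * z.re := by simp

theorem cutoff_pos (hω : 0 < ω) (k : ℕ) : 0 < cutoff ω δ k := by
  unfold cutoff
  positivity

theorem cutoff_le_inv (hω : 0 < ω) (hδ : δ ≤ 1) (k : ℕ) : cutoff ω δ k ≤ ω⁻¹ := by
  rw [cutoff, div_eq_mul_inv]
  exact mul_le_of_le_one_left (inv_nonneg.2 hω.le)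
    (Real.rpow_le_one_of_one_le_of_nonpos (by simp) (by linarith))

theorem log_cutoff (hω : 0 < ω) (k : ℕ) :
    Real.log (cutoff ω δ k) = (δ - 1) * Real.log (k + 1) - Real.log ω := by
  rw [cutoff, Real.log_div (by positivity) hω.ne', Real.log_rpow (by positivity)]

theorem ofReal_cpow_eq_exp {x : ℝ} (hx : 0 < x) (w : ℂ) : (x : ℂ) ^ w = exp (Real.log x * w) := by
  rw [cpow_def_of_ne_zero (ofReal_ne_zero.2 hx.ne'), ofReal_log hx.le]

theorem weight_mul_cutoff_cpow (hω : 0 < ω) (k : ℕ) (z r : ℂ) :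
    weight ω k z * (cutoff ω δ k : ℂ) ^ (r - 2 * z) =
      (ω : ℂ) ^ (-(r + 1)) * (((k : ℝ) + 1 : ℝ) : ℂ) ^ (-(1 + 2 * δ * z + (1 - δ) * r)) := by
  have hk : (0 : ℝ) < k + 1 := k.cast_add_one_pos
  rw [weight, ofReal_cpow_eq_exp (mul_pos hk hω), ofReal_cpow_eq_exp (cutoff_pos hω k),
    ofReal_cpow_eq_exp hω, ofReal_cpow_eq_exp hk, log_cutoff hω, Real.log_mul hk.ne' hω.ne',
    ← exp_add, ← exp_add]
  congr 1
  push_cast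
  ring

theorem norm_weight_mul_cutoff_rpow (hω : 0 < ω) (k : ℕ) (z : ℂ) (r : ℝ) :
    ‖weight ω k z‖ * cutoff ω δ k ^ (r - 2 * z.re) =
      ω ^ (-(r + 1)) * ((k : ℝ) + 1) ^ (-(1 + 2 * δ * z.re + (1 - δ) * r)) := by
  have h := congrArg norm (weight_mul_cutoff_cpow (δ := δ) hω k z r)
  rw [norm_mul, norm_mul, norm_cpow_eq_rpow_re_of_pos (cutoff_pos hω k),
    norm_cpow_eq_rpow_re_of_pos hω, norm_cpow_eq_rpow_re_of_pos k.cast_add_one_pos] at h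
  simpa using h

theorem differentiable_weight (hω : 0 < ω) (k : ℕ) : Differentiable ℂ (weight ω k) := by
  have hne : ((((k : ℝ) + 1) * ω : ℝ) : ℂ) ≠ 0 := ofReal_ne_zero.2 (by positivity)
  exact Differentiable.const_cpow (by fun_prop) (.inl hne)

theorem differentiableAt_weight_mul_comp (hω : 0 < ω) (k : ℕ) {M : ℂ → ℂ} {z : ℂ}
    (hM : DifferentiableAt ℂ M (2 - 2 * z)) :
    DifferentiableAt ℂ (fun z ↦ weight ω k z * M (2 - 2 * z)) z :=
  (differentiable_weight hω k z).mul
    (DifferentiableAt.comp (g := M) (f := fun z ↦ 2 - 2 * z) z hM (by fun_prop))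

theorem summable_nat_add_one_rpow {r : ℝ} (hr : 1 < r) :
    Summable fun k : ℕ ↦ ((k : ℝ) + 1) ^ (-r) := by
  simpa using (summable_nat_add_iff 1).2 (Real.summable_nat_rpow.2 (neg_lt_neg hr))

theorem weight_eq (hω : 0 < ω) (k : ℕ) (z : ℂ) :
    weight ω k z = (ω : ℂ) ^ (-(2 * z + 1)) * (1 / ((k : ℂ) + 1) ^ (2 * z + 1)) := by
  rw [weight, ofReal_mul, mul_cpow_ofReal_nonneg (by positivity) hω.le, mul_comm,
    cpow_neg _ (2 * z + 1), cpow_neg _ (2 * z + 1), one_div]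
  push_cast
  rfl

theorem tsum_weight (hω : 0 < ω) {z : ℂ} (hz : 0 < z.re) :
    ∑' k, weight ω k z = (ω : ℂ) ^ (-(2 * z + 1)) * riemannZeta (2 * z + 1) := by
  simp only [weight_eq hω, tsum_mul_left]
  rw [zeta_eq_tsum_one_div_nat_add_one_cpow (by simpa using hz)]

theorem norm_tailTerm_le (hω : 0 < ω) (hf2 : MellinConvergent f 2) (k : ℕ) {z : ℂ}
    (hz : 0 ≤ z.re) :
    ‖tailTerm ω δ f k z‖ ≤
      ω⁻¹ * (∫ u in Ioi 0, u * ‖f u‖) * ((k : ℝ) + 1) ^ (-(1 + 2 * δ * z.re)) := by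
  have hmellin : ‖mellin ((Ioi (cutoff ω δ k)).indicator f) (2 - 2 * z)‖ ≤
      cutoff ω δ k ^ (0 - 2 * z.re) * ∫ u in Ioi 0, u * ‖f u‖ := by
    have two_sub_one : (2 : ℝ) - 1 = 1 := by norm_num
    have h := norm_mellin_indicator_Ioi_le (σ := 2) (s := 2 - 2 * z) hf2 (cutoff_pos (δ := δ) hω k)
      (by simpa using hz)
    simpa only [re_two_sub_two_mul, sub_sub_cancel_left, zero_sub, two_sub_one, Real.rpow_one]
      using h
  calc ‖tailTerm ω δ f k z‖
      ≤ ‖weight ω k z‖ * (cutoff ω δ k ^ (0 - 2 * z.re) * ∫ u in Ioi 0, u * ‖f u‖) := by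
        rw [tailTerm, norm_mul]
        gcongr
    _ = ω⁻¹ * (∫ u in Ioi 0, u * ‖f u‖) * ((k : ℝ) + 1) ^ (-(1 + 2 * δ * z.re)) := by
        rw [← mul_assoc, norm_weight_mul_cutoff_rpow hω, zero_add, Real.rpow_neg_one, mul_zero,
          add_zero]
        ring

theorem isNormallySummable_tailTerm (hω : 0 < ω) (hδ : 0 < δ) (hf : LocallyIntegrable f)
    (hf2 : MellinConvergent f 2) {c : ℝ} (hc : 2 ≤ c) (hfc : f =O[atTop] (· ^ (-c))) :
    IsNormallySummable (tailTerm ω δ f) where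
  differentiableOn k z (hz : 0 < z.re) := by
    have hre : (2 - 2 * z).re < c := by
      rw [re_two_sub_two_mul]
      linarith
    exact (differentiableAt_weight_mul_comp hω k (differentiableAt_mellin_indicator_Ioi hf
      (cutoff_pos hω k) hfc hre)).differentiableWithinAt
  exists_bound {ε} hε := by
    refine ⟨_, (summable_nat_add_one_rpow (r := 1 + 2 * δ * ε) ?_).mul_left
      (ω⁻¹ * ∫ u in Ioi 0, u * ‖f u‖), fun k z hz ↦
      (norm_tailTerm_le hω hf2 k (hε.le.trans hz)).trans ?_⟩
    · have := mul_pos hδ hε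
      linarith
    · have hint : 0 ≤ ∫ u in Ioi (0 : ℝ), u * ‖f u‖ :=
        setIntegral_nonneg measurableSet_Ioi fun u hu ↦ mul_nonneg (le_of_lt hu) (norm_nonneg _)
      gcongr
      simp

end ConeSums

section HeadSums

variable {ω δ b C : ℝ} {f g : ℝ → ℂ} {z : ℂ}

theorem forall_Ioc_cutoff (hω : 0 < ω) (hδ : δ ≤ 1) {p : ℝ → Prop} (hp : ∀ u ∈ Ioc 0 ω⁻¹, p u)
    (k : ℕ) : ∀ u ∈ Ioc 0 (cutoff ω δ k), p u :=
  fun u hu ↦ hp u ⟨hu.1, hu.2.trans (cutoff_le_inv hω hδ k)⟩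

theorem norm_headTerm_le (hω : 0 < ω) (hδ : δ ≤ 1) (hfb : ∀ u ∈ Ioc 0 ω⁻¹, ‖f u‖ ≤ C * u ^ b)
    (hz : 2 * z.re < b + 2) (k : ℕ) :
    ‖headTerm ω δ f k z‖ ≤ C * ω ^ (-(b + 3)) / (b + 2 - 2 * z.re) *
      ((k : ℝ) + 1) ^ (-(1 + 2 * δ * z.re + (1 - δ) * (b + 2))) := by
  have hre : (2 - 2 * z).re + b = b + 2 - 2 * z.re := by
    rw [re_two_sub_two_mul]
    ring
  have hmellin := norm_mellin_indicator_Iic_le (s := 2 - 2 * z) (cutoff_pos hω k)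
    (forall_Ioc_cutoff hω hδ hfb k) (by linarith)
  rw [hre] at hmellin
  calc ‖headTerm ω δ f k z‖
      ≤ ‖weight ω k z‖ * (C * cutoff ω δ k ^ (b + 2 - 2 * z.re) / (b + 2 - 2 * z.re)) := by
        rw [headTerm, norm_mul]
        gcongr
    _ = C / (b + 2 - 2 * z.re) * (‖weight ω k z‖ * cutoff ω δ k ^ (b + 2 - 2 * z.re)) := by ring
    _ = _ := by
        rw [norm_weight_mul_cutoff_rpow hω]
        ring_nf

theorem summable_headTerm (hω : 0 < ω) (hδ : δ ≤ 1) (hfb : ∀ u ∈ Ioc 0 ω⁻¹, ‖f u‖ ≤ C * u ^ b)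
    (hz : 2 * z.re < b + 2) (hz' : 0 < 2 * δ * z.re + (1 - δ) * (b + 2)) :
    Summable fun k ↦ headTerm ω δ f k z :=
  ((summable_nat_add_one_rpow (by linarith)).mul_left _).of_norm_bounded
    (norm_headTerm_le hω hδ hfb hz)

theorem norm_headSum_le (hω : 0 < ω) (hδ : δ ≤ 1) (hfb : ∀ u ∈ Ioc 0 ω⁻¹, ‖f u‖ ≤ C * u ^ b)
    (hz : 2 * z.re < b + 2) (hz' : 0 < 2 * δ * z.re + (1 - δ) * (b + 2)) :
    ‖headSum ω δ f z‖ ≤ C * ω ^ (-(b + 3)) / (b + 2 - 2 * z.re) *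
      ∑' k : ℕ, ((k : ℝ) + 1) ^ (-(1 + 2 * δ * z.re + (1 - δ) * (b + 2))) := by
  rw [← tsum_mul_left]
  exact tsum_of_norm_bounded
    ((summable_nat_add_one_rpow (by linarith)).mul_left _).hasSum (norm_headTerm_le hω hδ hfb hz)

theorem differentiableAt_headTerm (hω : 0 < ω) (hδ : δ ≤ 1) (hf : LocallyIntegrable f)
    (hfb : ∀ u ∈ Ioc 0 ω⁻¹, ‖f u‖ ≤ C * u ^ b) (hz : 2 * z.re < b + 2) (k : ℕ) :
    DifferentiableAt ℂ (headTerm ω δ f k) z := by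
  refine differentiableAt_weight_mul_comp hω k (differentiableAt_mellin_indicator_Iic hf
    (cutoff_pos hω k) (forall_Ioc_cutoff hω hδ hfb k) ?_)
  rw [re_two_sub_two_mul]
  linarith

theorem differentiableAt_headSum (hω : 0 < ω) (hδ0 : 0 < δ) (hδ1 : δ ≤ 1)
    (hf : LocallyIntegrable f) (hfb : ∀ u ∈ Ioc 0 ω⁻¹, ‖f u‖ ≤ C * u ^ b)
    (hz : 2 * z.re < b + 2) (hz' : 0 < 2 * δ * z.re + (1 - δ) * (b + 2)) :
    DifferentiableAt ℂ (headSum ω δ f) z := by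
  obtain ⟨σ₁, hσ₁, hσ₁z⟩ : ∃ σ, -((1 - δ) * (b + 2)) / (2 * δ) < σ ∧ σ < z.re :=
    exists_between (by rw [div_lt_iff₀ (by positivity)]; linarith)
  obtain ⟨σ₂, hzσ₂, hσ₂⟩ : ∃ σ, z.re < σ ∧ σ < (b + 2) / 2 := exists_between (by linarith)
  rw [div_lt_iff₀ (by positivity)] at hσ₁
  have hC : 0 ≤ C := by
    have hle := (norm_nonneg _).trans (hfb ω⁻¹ (right_mem_Ioc.2 (inv_pos.2 hω)))
    exact nonneg_of_mul_nonneg_left hle (by positivity)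
  have hdom : ∀ k (w : ℂ), w ∈ {w : ℂ | σ₁ < w.re ∧ w.re < σ₂} → ‖headTerm ω δ f k w‖ ≤
      C * ω ^ (-(b + 3)) / (b + 2 - 2 * σ₂) *
        ((k : ℝ) + 1) ^ (-(1 + 2 * δ * σ₁ + (1 - δ) * (b + 2))) := fun k w hw ↦ by
    obtain ⟨hw₁, hw₂⟩ := hw
    have hpos : 0 < b + 2 - 2 * σ₂ := by linarith
    refine (norm_headTerm_le hω hδ1 hfb (by linarith) k).trans ?_
    gcongr
    simp
  refine (differentiableOn_tsum_of_summable_norm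
    ((summable_nat_add_one_rpow (by linarith)).mul_left _) (fun k w hw ↦ ?_)
    (isOpen_re_strip σ₁ σ₂) hdom).differentiableAt
    ((isOpen_re_strip σ₁ σ₂).mem_nhds ⟨hσ₁z, hzσ₂⟩)
  exact (differentiableAt_headTerm hω hδ1 hf hfb (by linarith [hw.2]) k).differentiableWithinAt

theorem mellinConvergent_head (hω : 0 < ω) (hδ : δ ≤ 1) (hf : LocallyIntegrable f)
    (hfb : ∀ u ∈ Ioc 0 ω⁻¹, ‖f u‖ ≤ C * u ^ b) (hz : 2 * z.re < b + 2) (k : ℕ) :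
    MellinConvergent ((Iic (cutoff ω δ k)).indicator f) (2 - 2 * z) := by
  refine mellinConvergent_indicator_Iic hf (cutoff_pos hω k) (forall_Ioc_cutoff hω hδ hfb k) ?_
  rw [re_two_sub_two_mul]
  linarith

theorem tailSum_eq_sub_headSum (hω : 0 < ω) (hδ : δ ≤ 1) (hf : LocallyIntegrable f)
    (hfb : ∀ u ∈ Ioc 0 ω⁻¹, ‖f u‖ ≤ C * u ^ b) {c : ℝ} (hc : 2 ≤ c)
    (hfc : f =O[atTop] (· ^ (-c))) (htail : Summable fun k ↦ tailTerm ω δ f k z)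
    (hz0 : 0 < z.re) (hz : 2 * z.re < b + 2) (hz' : 0 < 2 * δ * z.re + (1 - δ) * (b + 2)) :
    tailSum ω δ f z =
      (ω : ℂ) ^ (-(2 * z + 1)) * riemannZeta (2 * z + 1) * mellin f (2 - 2 * z) -
        headSum ω δ f z := by
  have hre : (2 - 2 * z).re < c := by
    rw [re_two_sub_two_mul]
    linarith
  have hsplit (k : ℕ) : weight ω k z * mellin f (2 - 2 * z) =
      tailTerm ω δ f k z + headTerm ω δ f k z := by
    rw [tailTerm, headTerm, ← mul_add, ← mellin_eq_indicator_Ioi_add_indicator_Iic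
      (mellinConvergent_head hω hδ hf hfb hz k)
      (mellinConvergent_indicator_Ioi hf (cutoff_pos hω k) hfc hre)]
  rw [eq_sub_iff_add_eq, tailSum, headSum, ← htail.tsum_add (summable_headTerm hω hδ hfb hz hz'),
    ← tsum_weight hω hz0, ← tsum_mul_right]
  simp only [hsplit]

theorem headSum_pow (hω : 0 < ω) (n : ℕ) (hz : 2 * z.re < n + 2)
    (hz' : 0 < 2 * δ * z.re + (1 - δ) * (n + 2)) :
    headSum ω δ (fun u ↦ (u : ℂ) ^ n) z =
      (ω : ℂ) ^ (-(n + 3 : ℂ)) * riemannZeta (1 + 2 * δ * z + (1 - δ) * (n + 2)) /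
        (n + 2 - 2 * z) := by
  have hre_mellin : 0 < (2 - 2 * z + n).re := by
    rw [add_re, re_two_sub_two_mul, natCast_re]
    linarith
  have hterm (k : ℕ) : headTerm ω δ (fun u ↦ (u : ℂ) ^ n) k z =
      (ω : ℂ) ^ (-(n + 3 : ℂ)) / (n + 2 - 2 * z) *
        (1 / ((k : ℂ) + 1) ^ (1 + 2 * δ * z + (1 - δ) * (n + 2))) := by
    rw [headTerm, mellin_indicator_Iic_pow n (cutoff_pos hω k).le hre_mellin,
      show 2 - 2 * z + n = (n + 2) - 2 * z by ring, ← mul_div_assoc, weight_mul_cutoff_cpow hω,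
      show (n : ℂ) + 2 + 1 = n + 3 by ring, cpow_neg _ (1 + _ + _)]
    push_cast
    ring
  have hre_zeta : (1 + 2 * δ * z + (1 - δ) * (n + 2) : ℂ).re =
      1 + 2 * δ * z.re + (1 - δ) * (n + 2) := by simp
  have hre : 1 < (1 + 2 * δ * z + (1 - δ) * (n + 2) : ℂ).re := by
    rw [hre_zeta]
    linarith
  rw [headSum, tsum_congr hterm, tsum_mul_left, ← zeta_eq_tsum_one_div_nat_add_one_cpow hre]
  ring

theorem headSum_const_mul (c : ℂ) : headSum ω δ (fun u ↦ c * f u) z = c * headSum ω δ f z := by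
  rw [headSum, headSum, ← tsum_mul_left]
  congr 1 with k
  have hind : (Iic (cutoff ω δ k)).indicator (fun u ↦ c * f u) =
      fun u ↦ c • (Iic (cutoff ω δ k)).indicator f u := indicator_const_smul _ c f
  rw [headTerm, headTerm, hind, mellin_const_smul, smul_eq_mul, mul_left_comm]

theorem headSum_add (hω : 0 < ω) (hδ : δ ≤ 1) (hf : LocallyIntegrable f)
    (hg : LocallyIntegrable g) {D : ℝ} (hfb : ∀ u ∈ Ioc 0 ω⁻¹, ‖f u‖ ≤ C * u ^ b)
    (hgb : ∀ u ∈ Ioc 0 ω⁻¹, ‖g u‖ ≤ D * u ^ b) (hz : 2 * z.re < b + 2)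
    (hz' : 0 < 2 * δ * z.re + (1 - δ) * (b + 2)) :
    headSum ω δ (f + g) z = headSum ω δ f z + headSum ω δ g z := by
  rw [headSum, headSum, headSum,
    ← (summable_headTerm hω hδ hfb hz hz').tsum_add (summable_headTerm hω hδ hgb hz hz')]
  congr 1 with k
  rw [headTerm, headTerm, headTerm, ← mul_add, indicator_add',
    ← (hasMellin_add (mellinConvergent_head hω hδ hf hfb hz k)
      (mellinConvergent_head hω hδ hg hgb hz k)).2]
  rfl

end HeadSums

section EvenProfiles

/-- The remainder of order `N` in the expansion `∑ a m * u ^ (2 * m)` of `f` at `0⁺`. -/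
noncomputable def taylorRemainder (f : ℝ → ℂ) (a : ℕ → ℂ) (N : ℕ) (u : ℝ) : ℂ :=
  f u - ∑ m ∈ Finset.range N, a m * (u : ℂ) ^ (2 * m)

/-- A continuous profile decaying faster than `u⁻²` at infinity whose asymptotic expansion at `0⁺`
is the even power series `∑ a m * u ^ (2 * m)`. -/
structure IsEvenProfile (f : ℝ → ℂ) (a : ℕ → ℂ) : Prop where
  continuous : Continuous f
  exists_isBigO_atTop : ∃ c : ℝ, 2 < c ∧ f =O[atTop] (· ^ (-c))
  exists_bound (N : ℕ) (R : ℝ) :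
    ∃ C : ℝ, ∀ u ∈ Ioc 0 R, ‖taylorRemainder f a N u‖ ≤ C * u ^ (2 * N)

/-- The meromorphic continuation in `z` of `headSum ω δ (fun u ↦ u ^ (2 * m)) z`. -/
noncomputable def headMonomial (ω δ : ℝ) (m : ℕ) (z : ℂ) : ℂ :=
  (ω : ℂ) ^ (-(2 * m + 3 : ℂ)) * riemannZeta (1 + 2 * δ * z + (1 - δ) * (2 * m + 2)) /
    (2 * m + 2 - 2 * z)

variable {ω δ : ℝ} {f : ℝ → ℂ} {a : ℕ → ℂ} {z : ℂ}

theorem taylorRemainder_zero : taylorRemainder f a 0 = f := by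
  ext u
  simp [taylorRemainder]

theorem taylorRemainder_eq_add_succ (N : ℕ) :
    taylorRemainder f a N =
      (fun u : ℝ ↦ a N * (u : ℂ) ^ (2 * N)) + taylorRemainder f a (N + 1) := by
  ext u
  rw [Pi.add_apply, taylorRemainder, taylorRemainder, Finset.sum_range_succ]
  ring

theorem IsEvenProfile.locallyIntegrable_taylorRemainder (hf : IsEvenProfile f a) (N : ℕ) :
    LocallyIntegrable (taylorRemainder f a N) := by
  have := hf.continuous
  unfold taylorRemainder
  exact Continuous.locallyIntegrable (by fun_prop)

theorem IsEvenProfile.locallyIntegrable (hf : IsEvenProfile f a) : LocallyIntegrable f :=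
  hf.continuous.locallyIntegrable

theorem IsEvenProfile.exists_taylorRemainder_bound (hf : IsEvenProfile f a) (N : ℕ) (R : ℝ) :
    ∃ C, ∀ u ∈ Ioc 0 R, ‖taylorRemainder f a N u‖ ≤ C * u ^ (2 * N : ℝ) := by
  obtain ⟨C, hC⟩ := hf.exists_bound N R
  refine ⟨C, fun u hu ↦ (hC u hu).trans_eq ?_⟩
  rw [← Real.rpow_natCast]
  push_cast
  rfl

theorem IsEvenProfile.mellinConvergent_two (hf : IsEvenProfile f a) : MellinConvergent f 2 := by
  obtain ⟨c, hc, hfc⟩ := hf.exists_isBigO_atTop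
  have hzero : f =O[𝓝[>] 0] (· ^ (-(0 : ℝ))) := by
    simpa using (hf.continuous.continuousAt (x := 0)).isBigO_one ℝ |>.mono nhdsWithin_le_nhds
  exact mellinConvergent_of_isBigO_rpow (hf.locallyIntegrable.locallyIntegrableOn _) hfc
    (by simpa using hc) hzero (by simp)

theorem IsEvenProfile.isNormallySummable_tailTerm (hf : IsEvenProfile f a) (hω : 0 < ω)
    (hδ : 0 < δ) : IsNormallySummable (tailTerm ω δ f) := by
  obtain ⟨c, hc, hfc⟩ := hf.exists_isBigO_atTop
  exact _root_.isNormallySummable_tailTerm hω hδ hf.locallyIntegrable hf.mellinConvergent_two hc.le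
    hfc

theorem IsEvenProfile.tailSum_eq (hf : IsEvenProfile f a) (hω : 0 < ω) (hδ0 : 0 < δ) (hδ1 : δ ≤ 1)
    (hz0 : 0 < z.re) (hz1 : z.re < 1) :
    tailSum ω δ f z =
      (ω : ℂ) ^ (-(2 * z + 1)) * riemannZeta (2 * z + 1) * mellin f (2 - 2 * z) -
        headSum ω δ f z := by
  obtain ⟨c, hc, hfc⟩ := hf.exists_isBigO_atTop
  obtain ⟨C, hC⟩ := hf.exists_taylorRemainder_bound 0 ω⁻¹
  rw [taylorRemainder_zero] at hC
  have hδz := mul_pos hδ0 hz0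
  exact tailSum_eq_sub_headSum hω hδ1 hf.locallyIntegrable hC hc.le hfc
    ((hf.isNormallySummable_tailTerm hω hδ0).summable hz0) hz0
    (by simp only [CharP.cast_eq_zero]; linarith) (by simp only [CharP.cast_eq_zero]; linarith)

theorem IsEvenProfile.analyticAt_headSum_taylorRemainder (hf : IsEvenProfile f a)
    (hω : 0 < ω) (hδ0 : 0 < δ) (hδ1 : δ ≤ 1) (N : ℕ) (hz : z.re < N + 1)
    (hz' : 0 < δ * z.re + (1 - δ) * (N + 1)) :
    AnalyticAt ℂ (headSum ω δ (taylorRemainder f a N)) z := by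
  obtain ⟨C, hC⟩ := hf.exists_taylorRemainder_bound N ω⁻¹
  have hlt : ∀ᶠ w : ℂ in 𝓝 z, w.re < N + 1 :=
    (continuous_re.tendsto z).eventually_lt_const hz
  have hpos : ∀ᶠ w : ℂ in 𝓝 z, 0 < δ * w.re + (1 - δ) * (N + 1) :=
    (Continuous.tendsto (by fun_prop) z).eventually_const_lt hz'
  refine analyticAt_iff_eventually_differentiableAt.2 ?_
  filter_upwards [hlt, hpos] with w hw hw'
  exact differentiableAt_headSum hω hδ0 hδ1 (hf.locallyIntegrable_taylorRemainder N) hC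
    (by linarith) (by linarith)

theorem IsEvenProfile.analyticAt_headSum (hf : IsEvenProfile f a) (hω : 0 < ω) (hδ0 : 0 < δ)
    (hδ1 : δ ≤ 1) (hz : z.re < 1) (hz' : 0 < δ * z.re + (1 - δ)) :
    AnalyticAt ℂ (headSum ω δ f) z := by
  simpa [taylorRemainder_zero] using hf.analyticAt_headSum_taylorRemainder hω hδ0 hδ1 0
    (by simpa using hz) (by simpa using hz')

theorem IsEvenProfile.headSum_taylorRemainder_succ (hf : IsEvenProfile f a) (hω : 0 < ω)
    (hδ : δ ≤ 1) (N : ℕ) (hz : z.re < N + 1) (hz' : 0 < δ * z.re + (1 - δ) * (N + 1)) :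
    headSum ω δ (taylorRemainder f a N) z =
      a N * headMonomial ω δ N z + headSum ω δ (taylorRemainder f a (N + 1)) z := by
  obtain ⟨C, hC⟩ := hf.exists_taylorRemainder_bound N ω⁻¹
  have hpow (u : ℝ) (hu : u ∈ Ioc 0 ω⁻¹) :
      ‖a N * (u : ℂ) ^ (2 * N)‖ ≤ ‖a N‖ * u ^ (2 * N : ℝ) := by
    rw [norm_mul, norm_pow, norm_real, Real.norm_of_nonneg hu.1.le, ← Real.rpow_natCast]
    push_cast
    rfl
  have hsucc (u : ℝ) (hu : u ∈ Ioc 0 ω⁻¹) :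
      ‖taylorRemainder f a (N + 1) u‖ ≤ (C + ‖a N‖) * u ^ (2 * N : ℝ) := by
    have heq := congrFun (taylorRemainder_eq_add_succ (f := f) (a := a) N) u
    rw [eq_sub_of_add_eq' heq.symm, add_mul]
    exact (norm_sub_le _ _).trans (add_le_add (hC u hu) (hpow u hu))
  have hmonomial := headSum_pow (δ := δ) (z := z) hω (2 * N) (by push_cast; linarith)
    (by push_cast; linarith)
  push_cast at hmonomial
  rw [taylorRemainder_eq_add_succ N, headSum_add hω hδ
    (Continuous.locallyIntegrable (by fun_prop)) (hf.locallyIntegrable_taylorRemainder (N + 1))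
    hpow hsucc (by linarith) (by linarith), headSum_const_mul, hmonomial, headMonomial]

theorem IsEvenProfile.headSum_eq (hf : IsEvenProfile f a) (hω : 0 < ω) (hδ0 : 0 < δ) (hδ1 : δ ≤ 1)
    (N : ℕ) (hz0 : 0 < z.re) (hz1 : z.re < 1) :
    headSum ω δ f z =
      ∑ m ∈ Finset.range N, a m * headMonomial ω δ m z + headSum ω δ (taylorRemainder f a N) z := by
  induction N with
  | zero => rw [Finset.sum_range_zero, zero_add, taylorRemainder_zero]
  | succ N ih =>
    have hδz := mul_pos hδ0 hz0
    have hδN : 0 ≤ (1 - δ) * (N + 1 : ℝ) := mul_nonneg (by linarith) (by positivity)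
    rw [ih, hf.headSum_taylorRemainder_succ hω hδ1 N (by linarith [N.cast_nonneg (α := ℝ)])
      (by linarith), Finset.sum_range_succ, add_assoc (Finset.sum _ _)]

theorem meromorphic_riemannZeta : Meromorphic riemannZeta := fun s ↦ by
  have han : AnalyticAt ℂ riemannZeta₁ s := differentiable_riemannZeta₁.analyticAt s
  have hmer : MeromorphicAt (fun s : ℂ ↦ (s - 1)⁻¹ * riemannZeta₁ s) s := by
    have := han.meromorphicAt
    fun_prop
  refine hmer.congr ?_
  rcases eq_or_ne s 1 with rfl | hs
  · filter_upwards [self_mem_nhdsWithin] with w hw using (riemannZeta_eq_inv_sub_mul hw).symm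
  · filter_upwards [nhdsWithin_le_nhds (eventually_ne_nhds hs)] with w hw
      using (riemannZeta_eq_inv_sub_mul hw).symm

theorem meromorphic_headMonomial (m : ℕ) : Meromorphic (headMonomial ω δ m) := fun z ↦ by
  have hzeta : MeromorphicAt (fun z : ℂ ↦ riemannZeta (1 + 2 * δ * z + (1 - δ) * (2 * m + 2))) z :=
    (meromorphic_riemannZeta _).comp_analyticAt
      (g := fun z : ℂ ↦ 1 + 2 * δ * z + (1 - δ) * (2 * m + 2)) (by fun_prop)
  unfold headMonomial
  fun_prop

theorem meromorphic_cpow_mul_riemannZeta (hω : 0 < ω) {M : ℂ → ℂ} (hM : Meromorphic M) :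
    Meromorphic fun z ↦ (ω : ℂ) ^ (-(2 * z + 1)) * riemannZeta (2 * z + 1) * M z := fun z ↦ by
  have hzeta : MeromorphicAt (fun z ↦ riemannZeta (2 * z + 1)) z :=
    (meromorphic_riemannZeta _).comp_analyticAt (g := fun z ↦ 2 * z + 1) (by fun_prop)
  have hpow : AnalyticAt ℂ (fun z ↦ (ω : ℂ) ^ (-(2 * z + 1))) z :=
    Differentiable.analyticAt
      (Differentiable.const_cpow (by fun_prop) (.inl (ofReal_ne_zero.2 hω.ne'))) z
  exact (hpow.meromorphicAt.fun_mul hzeta).fun_mul (hM z)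

variable {M : ℂ → ℂ}

theorem IsEvenProfile.exists_meromorphicOn_strip (hf : IsEvenProfile f a) (hω : 0 < ω)
    (hδ0 : 0 < δ) (hδ1 : δ < 1) (hM : Meromorphic M)
    (hMf : ∀ z : ℂ, 0 < z.re → z.re < 1 → mellin f (2 - 2 * z) = M z) (n : ℕ) :
    ∃ g, MeromorphicOn g {z | -(n : ℝ) < z.re ∧ z.re < 1} ∧
      EqOn g (tailSum ω δ f) {z | 0 < z.re ∧ z.re < 1} := by
  obtain ⟨N, hN⟩ := exists_nat_gt (δ * n / (1 - δ))
  rw [div_lt_iff₀ (by linarith)] at hN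
  refine ⟨fun z ↦ (ω : ℂ) ^ (-(2 * z + 1)) * riemannZeta (2 * z + 1) * M z -
      (∑ m ∈ Finset.range N, a m * headMonomial ω δ m z +
        headSum ω δ (taylorRemainder f a N) z), fun z hz ↦ ?_, fun z hz ↦ ?_⟩
  · have hmain := meromorphic_cpow_mul_riemannZeta hω hM z
    have hsummand (m : ℕ) : MeromorphicAt (fun z ↦ a m * headMonomial ω δ m z) z :=
      (MeromorphicAt.const (a m) z).fun_mul (meromorphic_headMonomial m z)
    have hrem : AnalyticAt ℂ (headSum ω δ (taylorRemainder f a N)) z :=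
      hf.analyticAt_headSum_taylorRemainder hω hδ0 hδ1.le N
        (by linarith [hz.2, N.cast_nonneg (α := ℝ)]) (by nlinarith [hz.1])
    exact hmain.fun_sub ((MeromorphicAt.fun_sum fun m _ ↦ hsummand m).fun_add hrem.meromorphicAt)
  · beta_reduce
    rw [hf.tailSum_eq hω hδ0 hδ1.le hz.1 hz.2, ← hf.headSum_eq hω hδ0 hδ1.le N hz.1 hz.2,
      hMf z hz.1 hz.2]

theorem IsEvenProfile.exists_meromorphic_tailSum (hf : IsEvenProfile f a) (hω : 0 < ω)
    (hδ0 : 0 < δ) (hδ1 : δ < 1) (hM : Meromorphic M)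
    (hMf : ∀ z : ℂ, 0 < z.re → z.re < 1 → mellin f (2 - 2 * z) = M z) :
    ∃ G, Meromorphic G ∧ EqOn G (tailSum ω δ f) {z | 0 < z.re} :=
  exists_meromorphic_of_strip one_pos
    (hf.isNormallySummable_tailTerm hω hδ0).differentiableOn_tsum
    (hf.exists_meromorphicOn_strip hω hδ0 hδ1 hM hMf)

theorem IsEvenProfile.eventuallyEq_tailSum_continuation (hf : IsEvenProfile f a) (hω : 0 < ω)
    (hδ0 : 0 < δ) (hδ1 : δ < 1) (hM : Meromorphic M)
    (hMf : ∀ z : ℂ, 0 < z.re → z.re < 1 → mellin f (2 - 2 * z) = M z) {G : ℂ → ℂ}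
    (hG : Meromorphic G) (hGf : EqOn G (tailSum ω δ f) {z | 0 < z.re}) :
    G =ᶠ[𝓝[≠] 0] fun z ↦
      (ω : ℂ) ^ (-(2 * z + 1)) * riemannZeta (2 * z + 1) * M z - headSum ω δ f z := by
  set U : Set ℂ := {z | -(1 - δ) / δ < z.re ∧ z.re < 1}
  have hlower : -(1 - δ) / δ < 0 := div_neg_of_neg_of_pos (by linarith) hδ0
  have hg : MeromorphicOn (fun z ↦ (ω : ℂ) ^ (-(2 * z + 1)) * riemannZeta (2 * z + 1) * M z -
      headSum ω δ f z) U := fun z hz ↦ by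
    have hz' := (div_lt_iff₀ hδ0).1 hz.1
    exact (meromorphic_cpow_mul_riemannZeta hω hM z).fun_sub
      (hf.analyticAt_headSum hω hδ0 hδ1.le hz.2 (by linarith)).meromorphicAt
  have hhalf : (1 / 2 : ℂ) ∈ {z : ℂ | 0 < z.re ∧ z.re < 1} := by norm_num
  refine eventuallyEq_nhdsNE_of_isPreconnected hG.meromorphicOn hg (isPreconnected_re_strip _ _)
    (x := 1 / 2) ⟨hlower.trans hhalf.1, hhalf.2⟩ (by simpa [U] using hlower)
    (EventuallyEq.filter_mono ?_ nhdsWithin_le_nhds)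
  filter_upwards [(isOpen_re_strip 0 1).mem_nhds hhalf] with z hz
  rw [hGf hz.1, hf.tailSum_eq hω hδ0 hδ1.le hz.1 hz.2, hMf z hz.1 hz.2]

end EvenProfiles

section PochhammerSums

/-- `(s)_j / (j! 4^j)`, the coefficient of `x^j` in `(1 - x/4)^{-s}`. -/
noncomputable def pochCoeff (s : ℂ) (j : ℕ) : ℂ := pochSym s j / ((Nat.factorial j : ℂ) * 4 ^ j)

/-- The term at `p = (i, j)` of `∑ j ≥ J, ∑ i, (s)_j / (j! 4^j) * T i (s + j)`, where the second
index is shifted so as to start from `0`. -/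
noncomputable def shiftedTerm {ι : Type*} (T : ι → ℂ → ℂ) (J : ℕ) (p : ι × ℕ) (s : ℂ) : ℂ :=
  pochCoeff s (p.2 + J) * T p.1 (s + (p.2 + J : ℕ))

/-- The double series `∑ j ≥ J, ∑ i, (s)_j / (j! 4^j) * T i (s + j)`. -/
noncomputable def shiftedSum {ι : Type*} (T : ι → ℂ → ℂ) (J : ℕ) (s : ℂ) : ℂ :=
  ∑' p, shiftedTerm T J p s

theorem differentiable_pochCoeff (j : ℕ) : Differentiable ℂ (pochCoeff · j) := by
  unfold pochCoeff pochSym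
  fun_prop

theorem pochCoeff_zero_right (s : ℂ) : pochCoeff s 0 = 1 := by
  simp [pochCoeff, pochSym]

theorem pochCoeff_zero_left_succ (j : ℕ) : pochCoeff 0 (j + 1) = 0 := by
  simp [pochCoeff, pochSym, Finset.prod_range_succ']

theorem pochCoeff_succ (s : ℂ) (j : ℕ) :
    pochCoeff s (j + 1) = pochCoeff s j * ((s + j) / (4 * (j + 1))) := by
  have hfact : (Nat.factorial j : ℂ) ≠ 0 := Nat.cast_ne_zero.2 j.factorial_ne_zero
  have hsucc : (j : ℂ) + 1 ≠ 0 := Nat.cast_add_one_ne_zero j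
  rw [pochCoeff, pochCoeff, pochSym, pochSym, Finset.prod_range_succ, Nat.factorial_succ, pow_succ]
  push_cast
  field_simp

theorem norm_pochCoeff_le {s : ℂ} {B : ℝ} (hs : ‖s‖ ≤ B) (j : ℕ) :
    ‖pochCoeff s j‖ ≤ ‖pochCoeff B j‖ := by
  have hB : 0 ≤ B := (norm_nonneg s).trans hs
  simp only [pochCoeff, pochSym, norm_div, norm_prod]
  gcongr with i
  have hnorm : ‖(B + i : ℂ)‖ = B + i := by
    rw [← ofReal_natCast, ← ofReal_add, norm_real, Real.norm_of_nonneg (by positivity)]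
  rw [hnorm]
  exact (norm_add_le _ _).trans (by simpa using hs)

theorem summable_norm_pochCoeff {B : ℝ} (hB : 0 < B) : Summable fun j ↦ ‖pochCoeff B j‖ := by
  have hadd (j : ℕ) : (B + j : ℂ) ≠ 0 := by
    exact_mod_cast (by positivity : (B + j : ℝ) ≠ 0)
  have hne (j : ℕ) : pochCoeff B j ≠ 0 :=
    div_ne_zero (Finset.prod_ne_zero_iff.2 fun i _ ↦ hadd i)
      (mul_ne_zero (Nat.cast_ne_zero.2 j.factorial_ne_zero) (by simp))
  have hratio (j : ℕ) : ‖pochCoeff B (j + 1)‖ / ‖pochCoeff B j‖ =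
      ‖(1 / 4 + (B - 1) / 4 * (1 / ((j : ℂ) + 1)) : ℂ)‖ := by
    have hsucc : (j : ℂ) + 1 ≠ 0 := Nat.cast_add_one_ne_zero j
    rw [← norm_div, pochCoeff_succ, mul_div_cancel_left₀ _ (hne j)]
    congr 1
    field_simp
    ring
  have hlim : Tendsto (fun j : ℕ ↦ ‖(1 / 4 + (B - 1) / 4 * (1 / ((j : ℂ) + 1)) : ℂ)‖) atTop
      (𝓝 ‖(1 / 4 + (B - 1) / 4 * 0 : ℂ)‖) :=
    ((tendsto_one_div_add_atTop_nhds_zero_nat.const_mul _).const_add _).norm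
  refine summable_of_ratio_test_tendsto_lt_one (l := 1 / 4) (by norm_num)
    (Eventually.of_forall fun j ↦ (norm_ne_zero_iff.2 (hne j))) ?_
  simp only [norm_norm, hratio]
  simpa using hlim

variable {ι : Type*} {T : ι → ℂ → ℂ} {J : ℕ} {s : ℂ}

theorem IsNormallySummable.exists_shiftedTerm_bound (hT : IsNormallySummable T)
    (hs : 0 < s.re + J) :
    ∃ u : ι × ℕ → ℝ, Summable u ∧ ∀ᶠ w in 𝓝 s, ∀ p, ‖shiftedTerm T J p w‖ ≤ u p := by
  obtain ⟨u, hu, hTu⟩ := hT.exists_bound (half_pos hs)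
  have hu0 (i : ι) : 0 ≤ u i :=
    (norm_nonneg _).trans (hTu i ((s.re + J) / 2 : ℝ) (ofReal_re _).ge)
  have hcoeff := (summable_nat_add_iff J).2
    (summable_norm_pochCoeff (by positivity : 0 < ‖s‖ + 1))
  refine ⟨_, hu.mul_of_nonneg hcoeff hu0 fun j ↦ norm_nonneg _, ?_⟩
  have hnorm : ∀ᶠ w : ℂ in 𝓝 s, ‖w‖ < ‖s‖ + 1 :=
    (continuous_norm.tendsto s).eventually_lt_const (lt_add_one _)
  have hre : ∀ᶠ w : ℂ in 𝓝 s, (s.re + J) / 2 < w.re + J :=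
    (Continuous.tendsto (by fun_prop) s).eventually_const_lt (half_lt_self hs)
  filter_upwards [hnorm, hre] with w hw hw' p
  rw [shiftedTerm, norm_mul, mul_comm]
  refine mul_le_mul (hTu _ _ ?_) (norm_pochCoeff_le hw.le _) (norm_nonneg _) (hu0 _)
  simp only [Nat.cast_add, add_re, natCast_re]
  linarith [p.2.cast_nonneg (α := ℝ)]

theorem IsNormallySummable.summable_norm_shiftedTerm (hT : IsNormallySummable T)
    (hs : 0 < s.re + J) : Summable fun p ↦ ‖shiftedTerm T J p s‖ := by
  obtain ⟨u, hu, hle⟩ := hT.exists_shiftedTerm_bound hs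
  exact hu.of_nonneg_of_le (fun p ↦ norm_nonneg _) hle.self_of_nhds

theorem IsNormallySummable.differentiableAt_shiftedTerm (hT : IsNormallySummable T)
    (p : ι × ℕ) (hs : 0 < s.re + J) : DifferentiableAt ℂ (shiftedTerm T J p) s := by
  have hre : 0 < (s + (p.2 + J : ℕ)).re := by
    simp only [Nat.cast_add, add_re, natCast_re]
    linarith [p.2.cast_nonneg (α := ℝ)]
  have hTp := (hT.differentiableOn p.1).differentiableAt ((isOpen_re_gt 0).mem_nhds hre)
  exact (differentiable_pochCoeff _ s).mul
    (DifferentiableAt.comp (g := T p.1) (f := fun s : ℂ ↦ s + (p.2 + J : ℕ)) s hTp (by fun_prop))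

theorem IsNormallySummable.analyticAt_shiftedSum (hT : IsNormallySummable T)
    (hs : 0 < s.re + J) : AnalyticAt ℂ (shiftedSum T J) s := by
  obtain ⟨u, hu, hle⟩ := hT.exists_shiftedTerm_bound hs
  have hre : ∀ᶠ w : ℂ in 𝓝 s, 0 < w.re + J :=
    (Continuous.tendsto (by fun_prop) s).eventually_const_lt hs
  obtain ⟨U, hU, hUo, hsU⟩ := mem_nhds_iff.1 (hle.and hre)
  exact (differentiableOn_tsum_of_summable_norm hu (fun p w hw ↦
    (hT.differentiableAt_shiftedTerm p (hU hw).2).differentiableWithinAt) hUo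
    fun p w hw ↦ (hU hw).1 p).analyticAt (hUo.mem_nhds hsU)

theorem IsNormallySummable.tendstoLocallyUniformlyOn_mul_shiftedTerm (hT : IsNormallySummable T)
    {g : ℂ → ℂ} (hg : Continuous g) :
    TendstoLocallyUniformlyOn (fun (N : Finset (ι × ℕ)) s ↦ ∑ p ∈ N, g s * shiftedTerm T J p s)
      (fun s ↦ ∑' p, g s * shiftedTerm T J p s) atTop {s | 0 < s.re + J} := by
  refine tendstoLocallyUniformlyOn_of_forall_exists_nhds fun s hs ↦ ?_
  obtain ⟨u, hu, hle⟩ := hT.exists_shiftedTerm_bound hs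
  have hg_lt : ∀ᶠ w in 𝓝 s, ‖g w‖ < ‖g s‖ + 1 :=
    (hg.norm.tendsto s).eventually_lt_const (lt_add_one _)
  refine ⟨_, mem_nhdsWithin_of_mem_nhds (hle.and hg_lt), tendstoUniformlyOn_tsum
    (hu.mul_left (‖g s‖ + 1)) fun p w hw ↦ ?_⟩
  rw [norm_mul]
  exact mul_le_mul hw.2.le (hw.1 p) (norm_nonneg _) (by positivity)

theorem IsNormallySummable.hasSum_shiftedSum (hT : IsNormallySummable T) (hs : 0 < s.re + J) :
    HasSum (fun j : ℕ ↦ pochCoeff s (j + J) * ∑' i, T i (s + (j + J : ℕ))) (shiftedSum T J s) := by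
  have hsum : HasSum (fun p : ℕ × ι ↦ shiftedTerm T J p.swap s) (shiftedSum T J s) :=
    (Equiv.prodComm ℕ ι).hasSum_iff.2 (hT.summable_norm_shiftedTerm hs).of_norm.hasSum
  refine hsum.prod_fiberwise fun j ↦ ?_
  have hre : 0 < (s + (j + J : ℕ)).re := by
    simp only [Nat.cast_add, add_re, natCast_re]
    linarith [j.cast_nonneg (α := ℝ)]
  simpa only [Prod.swap_prod_mk, shiftedTerm] using (hT.summable hre).hasSum.mul_left _

theorem IsNormallySummable.shiftedSum_zero_eq (hT : IsNormallySummable T) (J : ℕ)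
    (hs : 0 < s.re) :
    shiftedSum T 0 s =
      ∑ j ∈ Finset.range J, pochCoeff s j * ∑' i, T i (s + j) + shiftedSum T J s := by
  have hzero := hT.hasSum_shiftedSum (J := 0) (s := s) (by simpa using hs)
  have hJ := (hasSum_nat_add_iff (f := fun j : ℕ ↦ pochCoeff s j * ∑' i, T i (s + j)) J).1
    (hT.hasSum_shiftedSum (J := J) (s := s) (by positivity))
  simp only [add_zero] at hzero
  rw [hzero.unique hJ, add_comm]

theorem shiftedSum_one_zero : shiftedSum T 1 0 = 0 := by
  simp [shiftedSum, shiftedTerm, pochCoeff_zero_left_succ]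

variable {G : ℂ → ℂ}

theorem IsNormallySummable.exists_meromorphic_shiftedSum (hT : IsNormallySummable T)
    (hG : Meromorphic G) (hGT : EqOn G (fun s ↦ ∑' i, T i s) {s | 0 < s.re}) :
    ∃ H, Meromorphic H ∧ EqOn H (shiftedSum T 0) {s | 0 < s.re} := by
  have hdiff : DifferentiableOn ℂ (shiftedSum T 0) {s | 0 < s.re} := fun s hs ↦
    (hT.analyticAt_shiftedSum (by simpa using hs)).differentiableAt.differentiableWithinAt
  refine exists_meromorphic_of_strip one_pos hdiff fun n ↦
    ⟨fun s ↦ ∑ j ∈ Finset.range n, pochCoeff s j * G (s + j) + shiftedSum T n s,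
      fun s hs ↦ ?_, fun s hs ↦ ?_⟩
  · have hshift (j : ℕ) : MeromorphicAt (fun s ↦ G (s + j)) s :=
      (hG _).comp_analyticAt (g := fun s : ℂ ↦ s + j) (by fun_prop)
    have hterm (j : ℕ) : MeromorphicAt (fun s ↦ pochCoeff s j * G (s + j)) s :=
      ((differentiable_pochCoeff j).analyticAt s).meromorphicAt.fun_mul (hshift j)
    have hrem := hT.analyticAt_shiftedSum (J := n) (s := s) (by linarith [hs.1])
    exact (MeromorphicAt.fun_sum fun j _ ↦ hterm j).fun_add hrem.meromorphicAt
  · beta_reduce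
    rw [hT.shiftedSum_zero_eq n hs.1]
    congr! 3 with j
    have hj : 0 < (s + j).re := by
      simpa using add_pos_of_pos_of_nonneg hs.1 j.cast_nonneg
    exact hGT hj

theorem IsNormallySummable.eventuallyEq_shiftedSum_continuation (hT : IsNormallySummable T)
    (hG : Meromorphic G) (hGT : EqOn G (fun s ↦ ∑' i, T i s) {s | 0 < s.re}) {H : ℂ → ℂ}
    (hH : Meromorphic H) (hHT : EqOn H (shiftedSum T 0) {s | 0 < s.re}) :
    H =ᶠ[𝓝[≠] 0] fun s ↦ G s + shiftedSum T 1 s := by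
  have hrhs : MeromorphicOn (fun s ↦ G s + shiftedSum T 1 s) {s | -1 < s.re} := fun s hs ↦
    (hG s).fun_add (hT.analyticAt_shiftedSum (by simpa using neg_lt_iff_pos_add.1 hs)).meromorphicAt
  refine eventuallyEq_nhdsNE_of_isPreconnected hH.meromorphicOn hrhs
    (convex_halfSpace_re_gt _).isPreconnected (x := 1) (by norm_num) (by norm_num)
    (EventuallyEq.filter_mono ?_ nhdsWithin_le_nhds)
  filter_upwards [(isOpen_re_gt 0).mem_nhds (by simp : (0 : ℝ) < (1 : ℂ).re)] with s hs
  rw [hHT hs, hT.shiftedSum_zero_eq 1 hs, hGT hs]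
  simp [pochCoeff_zero_right]

end PochhammerSums

section SineZeta

/-- The entire function `sin (π s) / (π s)`, written through the reflection formula. -/
noncomputable def sincPi (s : ℂ) : ℂ := (Gamma (1 + s))⁻¹ * (Gamma (1 - s))⁻¹

theorem two_mul_sin_pi_mul_div_pi (s : ℂ) : 2 * sin (Real.pi * s) / Real.pi = 2 * s * sincPi s := by
  rcases eq_or_ne s 0 with rfl | hs
  · simp
  · calc 2 * sin (Real.pi * s) / Real.pi = 2 * (Gamma s * Gamma (1 - s))⁻¹ := by
          rw [Gamma_mul_Gamma_one_sub, inv_div, mul_div_assoc]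
      _ = 2 * s * sincPi s := by
          rw [sincPi, add_comm 1 s, Gamma_add_one s hs, mul_inv, mul_inv]
          field_simp

theorem sincPi_zero : sincPi 0 = 1 := by simp [sincPi]

theorem differentiable_sincPi : Differentiable ℂ sincPi :=
  (differentiable_one_div_Gamma.comp (by fun_prop : Differentiable ℂ fun s : ℂ ↦ 1 + s)).mul
    (differentiable_one_div_Gamma.comp (by fun_prop : Differentiable ℂ fun s : ℂ ↦ 1 - s))

theorem hasDerivAt_sincPi_zero : HasDerivAt sincPi 0 0 := by
  have hadd : HasDerivAt (fun s ↦ Gamma (1 + s)) (-Real.eulerMascheroniConstant : ℂ) 0 :=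
    HasDerivAt.comp_const_add 1 0 (by simpa using hasDerivAt_Gamma_one)
  have hsub : HasDerivAt (fun s ↦ Gamma (1 - s)) (-(-Real.eulerMascheroniConstant) : ℂ) 0 :=
    HasDerivAt.comp_const_sub 1 0 (by simpa using hasDerivAt_Gamma_one)
  exact ((hadd.inv (by simp)).mul (hsub.inv (by simp))).congr_deriv (by simp)

/-- The function `(2 sin (π s) / π) * (A s * ζ(2s + 1) + B s)` with its removable singularity at
`0` removed. -/
noncomputable def sineZeta (A B : ℂ → ℂ) (s : ℂ) : ℂ :=
  sincPi s * (A s * riemannZeta₁ (2 * s + 1) + 2 * s * B s)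

variable {A B : ℂ → ℂ}

theorem sineZeta_eq {s : ℂ} (hs : s ≠ 0) :
    sineZeta A B s =
      2 * sin (Real.pi * s) / Real.pi * (A s * riemannZeta (2 * s + 1) + B s) := by
  rw [sineZeta, two_mul_sin_pi_mul_div_pi, riemannZeta_eq_inv_sub_mul (by simpa using hs),
    add_sub_cancel_right]
  field_simp

theorem sineZeta_zero : sineZeta A B 0 = A 0 := by
  simp [sineZeta, sincPi_zero, riemannZeta₁_one]

theorem analyticAt_sineZeta_zero (hA : AnalyticAt ℂ A 0) (hB : AnalyticAt ℂ B 0) :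
    AnalyticAt ℂ (sineZeta A B) 0 := by
  have hzeta : AnalyticAt ℂ (fun s ↦ riemannZeta₁ (2 * s + 1)) 0 :=
    (differentiable_riemannZeta₁.comp
      (by fun_prop : Differentiable ℂ fun s : ℂ ↦ 2 * s + 1)).analyticAt 0
  exact (differentiable_sincPi.analyticAt 0).mul
    ((hA.mul hzeta).add ((analyticAt_const.mul analyticAt_id).mul hB))

theorem hasDerivAt_sineZeta_zero {A' : ℂ} (hA : HasDerivAt A A' 0) (hB : DifferentiableAt ℂ B 0) :
    HasDerivAt (sineZeta A B) (A' + 2 * Real.eulerMascheroniConstant * A 0 + 2 * B 0) 0 := by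
  have hzeta : HasDerivAt (fun s ↦ riemannZeta₁ (2 * s + 1))
      (Real.eulerMascheroniConstant * (2 * 1)) 0 := by
    refine HasDerivAt.comp (h₂ := riemannZeta₁) 0 ?_
      (((hasDerivAt_id (0 : ℂ)).const_mul 2).add_const 1)
    have hone := (differentiable_riemannZeta₁ 1).hasDerivAt
    rw [deriv_riemannZeta₁_one] at hone
    simpa using hone
  have hlin : HasDerivAt (fun s : ℂ ↦ 2 * s * B s) (2 * B 0) 0 :=
    (((hasDerivAt_id (0 : ℂ)).const_mul 2).mul hB.hasDerivAt).congr_deriv (by simp)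
  refine (hasDerivAt_sincPi_zero.mul ((hA.mul hzeta).add hlin)).congr_deriv ?_
  simp only [Pi.add_apply, Pi.mul_apply, mul_zero, zero_add, riemannZeta₁_one, mul_one, zero_mul,
    add_zero, sincPi_zero, one_mul]
  ring

end SineZeta

section EvenProfileContinuation

variable {ω δ : ℝ} {f : ℝ → ℂ} {a : ℕ → ℂ} {M : ℂ → ℂ}

theorem IsEvenProfile.exists_meromorphic_sin_mul_shiftedSum (hf : IsEvenProfile f a) (hω : 0 < ω)
    (hδ0 : 0 < δ) (hδ1 : δ < 1) (hM : Meromorphic M)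
    (hMf : ∀ z : ℂ, 0 < z.re → z.re < 1 → mellin f (2 - 2 * z) = M z) :
    ∃ F, Meromorphic F ∧
      EqOn F (fun s ↦ 2 * sin (Real.pi * s) / Real.pi * shiftedSum (tailTerm ω δ f) 0 s)
        {s | 0 < s.re} ∧
      F =ᶠ[𝓝 0] sineZeta (fun s ↦ (ω : ℂ) ^ (-(2 * s + 1)) * M s)
        (fun s ↦ shiftedSum (tailTerm ω δ f) 1 s - headSum ω δ f s) := by
  have hT := hf.isNormallySummable_tailTerm hω hδ0
  obtain ⟨G, hG, hGT⟩ := hf.exists_meromorphic_tailSum hω hδ0 hδ1 hM hMf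
  obtain ⟨H, hH, hHT⟩ := hT.exists_meromorphic_shiftedSum hG hGT
  set germ := sineZeta (fun s ↦ (ω : ℂ) ^ (-(2 * s + 1)) * M s)
    (fun s ↦ shiftedSum (tailTerm ω δ f) 1 s - headSum ω δ f s)
  set P : ℂ → ℂ := fun s ↦ 2 * sin (Real.pi * s) / Real.pi * H s
  have hP : Meromorphic P := fun s ↦
    ((by fun_prop : Differentiable ℂ fun s : ℂ ↦ 2 * sin (Real.pi * s) / Real.pi).analyticAt
      s).meromorphicAt.fun_mul (hH s)
  have hPgerm : P =ᶠ[𝓝[≠] 0] germ := by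
    filter_upwards [hT.eventuallyEq_shiftedSum_continuation hG hGT hH hHT,
      hf.eventuallyEq_tailSum_continuation hω hδ0 hδ1 hM hMf hG hGT,
      self_mem_nhdsWithin] with s hHs hGs hs
    simp only [P, germ, sineZeta_eq hs, hHs, hGs]
    ring
  refine ⟨Function.update P 0 (germ 0), fun s ↦ (hP s).update _ _, fun s hs ↦ ?_, ?_⟩
  · have hs0 : s ≠ 0 := by
      rintro rfl
      simp at hs
    simp only [Function.update_of_ne hs0, P, hHT hs]
  · exact eventuallyEq_nhds_of_eventuallyEq_nhdsNE
      ((Function.update_eventuallyEq_nhdsNE P 0 0 _).trans hPgerm) (Function.update_self ..)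

theorem IsEvenProfile.analyticAt_shiftedSum_sub_headSum (hf : IsEvenProfile f a) (hω : 0 < ω)
    (hδ0 : 0 < δ) (hδ1 : δ < 1) :
    AnalyticAt ℂ (fun s ↦ shiftedSum (tailTerm ω δ f) 1 s - headSum ω δ f s) 0 :=
  ((hf.isNormallySummable_tailTerm hω hδ0).analyticAt_shiftedSum (by simp)).sub
    (hf.analyticAt_headSum hω hδ0 hδ1.le (by simp) (by simpa using hδ1))

theorem hasDerivAt_cpow_neg_two_mul_add_one (hω : 0 < ω) :
    HasDerivAt (fun s : ℂ ↦ (ω : ℂ) ^ (-(2 * s + 1))) ((ω : ℂ)⁻¹ * Real.log ω * -2) 0 := by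
  have hexp : HasDerivAt (fun s : ℂ ↦ -(2 * s + 1)) (-(2 * 1)) 0 :=
    (((hasDerivAt_id _).const_mul 2).add_const 1).neg
  refine (hexp.const_cpow (.inl (ofReal_ne_zero.2 hω.ne'))).congr_deriv ?_
  rw [← ofReal_log hω.le]
  simp [cpow_neg_one]

theorem IsEvenProfile.exists_continuation_hasDerivAt_zero (hf : IsEvenProfile f a) (hω : 0 < ω)
    (hδ0 : 0 < δ) (hδ1 : δ < 1) (hM : Meromorphic M)
    (hMf : ∀ z : ℂ, 0 < z.re → z.re < 1 → mellin f (2 - 2 * z) = M z) {M' : ℂ}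
    (hM' : HasDerivAt M M' 0) :
    ∃ F, Meromorphic F ∧
      EqOn F (fun s ↦ 2 * sin (Real.pi * s) / Real.pi * shiftedSum (tailTerm ω δ f) 0 s)
        {s | 0 < s.re} ∧
      AnalyticAt ℂ F 0 ∧ F 0 = M 0 / ω ∧
      HasDerivAt F ((M' + 2 * (Real.eulerMascheroniConstant - Real.log ω) * M 0) / ω -
        2 * headSum ω δ f 0) 0 := by
  obtain ⟨F, hF, hFsum, hFgerm⟩ := hf.exists_meromorphic_sin_mul_shiftedSum hω hδ0 hδ1 hM hMf
  have hpowM := (hasDerivAt_cpow_neg_two_mul_add_one hω).mul hM'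
  have hrest := hf.analyticAt_shiftedSum_sub_headSum hω hδ0 hδ1
  have hpow_an : AnalyticAt ℂ (fun s : ℂ ↦ (ω : ℂ) ^ (-(2 * s + 1))) 0 :=
    (by fun_prop (disch := simp [hω.ne']) :
      Differentiable ℂ fun s : ℂ ↦ (ω : ℂ) ^ (-(2 * s + 1))).analyticAt 0
  have hpowM_an := hpow_an.mul ((hM 0).analyticAt hM'.continuousAt)
  refine ⟨F, hF, hFsum, (analyticAt_sineZeta_zero hpowM_an hrest).congr hFgerm.symm, ?_, ?_⟩
  · rw [hFgerm.eq_of_nhds, sineZeta_zero]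
    simp [cpow_neg_one, div_eq_inv_mul]
  · refine ((hasDerivAt_sineZeta_zero hpowM hrest.differentiableAt).congr_of_eventuallyEq
      hFgerm).congr_deriv ?_
    simp only [mul_zero, zero_add, cpow_neg_one, shiftedSum_one_zero, zero_sub, Pi.mul_apply]
    ring

end EvenProfileContinuation

section SmoothProfiles

theorem exists_taylorWithinEval_Ici_bound {g : ℝ → ℂ} (hg : ContDiffOn ℝ (⊤ : ℕ∞) g (Ici 0))
    (n : ℕ) {R : ℝ} (hR : 0 < R) :
    ∃ C, ∀ x ∈ Icc 0 R, ‖g x - taylorWithinEval g n (Ici 0) 0 x‖ ≤ C * x ^ (n + 1) := by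
  obtain ⟨C, hC⟩ := exists_taylor_mean_remainder_bound (n := n) hR.le
    (by exact_mod_cast (contDiffOn_infty.1 hg (n + 1)).mono Icc_subset_Ici_self)
  refine ⟨C, fun x hx ↦ ?_⟩
  have hcoeff (k : ℕ) :
      iteratedDerivWithin k g (Icc 0 R) 0 = iteratedDerivWithin k g (Ici 0) 0 := by
    have hsets : Icc 0 R =ᶠ[𝓝 0] Ici 0 := by
      filter_upwards [Iio_mem_nhds hR] with x hx
      exact propext ⟨fun h ↦ h.1, fun h ↦ ⟨h, le_of_lt hx⟩⟩
    simp only [iteratedDerivWithin, iteratedFDerivWithin_congr_set hsets]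
  simpa only [taylor_within_apply, hcoeff, sub_zero] using hC x hx

theorem isEvenProfile_comp_sq {g : ℝ → ℂ} {c : ℝ} (hg : ContDiffOn ℝ (⊤ : ℕ∞) g (Ici 0))
    (hc : 2 < c) (hgO : (fun u ↦ g (u ^ 2)) =O[atTop] (· ^ (-c))) :
    IsEvenProfile (fun u ↦ g (u ^ 2))
      (fun m ↦ (m.factorial : ℂ)⁻¹ * iteratedDerivWithin m g (Ici 0) 0) := by
  have hcont : Continuous fun u ↦ g (u ^ 2) :=
    hg.continuousOn.comp_continuous (by fun_prop) fun u ↦ sq_nonneg u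
  refine ⟨hcont, ⟨c, hc, hgO⟩, fun N R ↦ ?_⟩
  rcases N with _ | n
  · obtain ⟨C, hC⟩ := (isCompact_Icc (a := 0) (b := R)).exists_bound_of_continuousOn
      hcont.continuousOn
    exact ⟨C, fun u hu ↦ by simpa [taylorRemainder] using hC u (Ioc_subset_Icc_self hu)⟩
  · rcases le_or_gt R 0 with hR | hR
    · exact ⟨0, fun u hu ↦ absurd hu (by simp [Ioc_eq_empty hR.not_gt])⟩
    · obtain ⟨C, hC⟩ := exists_taylorWithinEval_Ici_bound hg n (pow_pos hR 2)
      refine ⟨C, fun u hu ↦ ?_⟩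
      have hbound := hC (u ^ 2) ⟨by positivity, pow_le_pow_left₀ hu.1.le hu.2 2⟩
      simp only [taylor_within_apply, sub_zero, ← pow_mul, real_smul, ofReal_mul, ofReal_inv,
        ofReal_natCast, ofReal_pow] at hbound
      simpa only [taylorRemainder, mul_right_comm] using hbound

end SmoothProfiles

section BetaKernel

theorem image_div_one_sub_Ioo : (fun t : ℝ ↦ t / (1 - t)) '' Ioo 0 1 = Ioi 0 := by
  ext x
  constructor
  · rintro ⟨t, ⟨ht0, ht1⟩, rfl⟩
    exact div_pos ht0 (sub_pos.2 ht1)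
  · intro (hx : 0 < x)
    refine ⟨x / (1 + x), ⟨by positivity, (div_lt_one (by positivity)).2 (by linarith)⟩, ?_⟩
    field_simp
    ring

theorem injOn_div_one_sub_Ioo : InjOn (fun t : ℝ ↦ t / (1 - t)) (Ioo 0 1) := by
  intro x hx y hy hxy
  rw [div_eq_div_iff (sub_pos.2 hx.2).ne' (sub_pos.2 hy.2).ne'] at hxy
  linarith

theorem hasDerivAt_div_one_sub {t : ℝ} (ht : t < 1) :
    HasDerivAt (fun t : ℝ ↦ t / (1 - t)) (1 / (1 - t) ^ 2) t :=
  ((hasDerivAt_id t).div ((hasDerivAt_id t).const_sub 1) (sub_pos.2 ht).ne').congr_deriv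
    (by simp)

theorem betaIntegrand_eq {t : ℝ} (ht : t ∈ Ioo 0 1) (s a : ℂ) :
    |1 / (1 - t) ^ 2| • (((t / (1 - t) : ℝ) : ℂ) ^ (s - 1) •
        ((1 + t / (1 - t) : ℝ) : ℂ) ^ (-a)) =
      (t : ℂ) ^ (s - 1) * (1 - t : ℂ) ^ (a - s - 1) := by
  have ht0 : 0 < t := ht.1
  have ht1 : 0 < 1 - t := sub_pos.2 ht.2
  have hne : ((1 - t : ℝ) : ℂ) ≠ 0 := ofReal_ne_zero.2 ht1.ne'
  have hone : 1 + t / (1 - t) = (1 - t)⁻¹ := by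
    field_simp
    ring
  have hinv (w : ℂ) : (((1 - t)⁻¹ : ℝ) : ℂ) ^ w = ((1 - t : ℝ) : ℂ) ^ (-w) := by
    have harg : arg (1 - t : ℝ) ≠ Real.pi := by
      rw [arg_ofReal_of_nonneg ht1.le]
      exact Real.pi_ne_zero.symm
    rw [ofReal_inv, inv_cpow _ _ harg, cpow_neg]
  have hsq : ((|1 / (1 - t) ^ 2| : ℝ) : ℂ) = ((1 - t : ℝ) : ℂ) ^ (-2 : ℂ) := by
    rw [abs_of_pos (by positivity), cpow_neg, cpow_ofNat, one_div, ofReal_inv, ofReal_pow]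
  have hcast : (1 - t : ℂ) = (1 - t : ℝ) := by push_cast; rfl
  have hexp : a - s - 1 = -2 + -(s - 1) + a := by ring
  rw [hone, div_eq_mul_inv t, ofReal_mul, mul_cpow_ofReal_nonneg ht0.le (by positivity), hinv, hinv,
    real_smul, hsq, smul_eq_mul, neg_neg, hcast, hexp, cpow_add _ _ hne, cpow_add _ _ hne]
  ring

theorem mellin_one_add_cpow_neg {s a : ℂ} (hs : 0 < s.re) (hsa : s.re < a.re) :
    mellin (fun x ↦ ((1 + x : ℝ) : ℂ) ^ (-a)) s = Gamma s * Gamma (a - s) / Gamma a := by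
  have hbeta := betaIntegral_eq_Gamma_mul_div s (a - s) hs (by simpa using hsa)
  rw [add_sub_cancel] at hbeta
  rw [← hbeta, mellin, betaIntegral, ← image_div_one_sub_Ioo,
    integral_image_eq_integral_abs_deriv_smul measurableSet_Ioo
      (fun t ht ↦ (hasDerivAt_div_one_sub ht.2).hasDerivWithinAt) injOn_div_one_sub_Ioo,
    intervalIntegral.integral_of_le zero_le_one, integral_Ioc_eq_integral_Ioo]
  exact setIntegral_congr_fun measurableSet_Ioo fun t ht ↦ betaIntegrand_eq ht s a

end BetaKernel

section PowerProfile

/-- The profile `(1 + S² u²)^{-q}`; up to the factor `u`, the function `A₁` is a multiple of the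
case `S = sinh η`, `q = 5/2`. -/
noncomputable def powerProfile (q S u : ℝ) : ℂ := ((1 + u ^ 2 * S ^ 2) ^ (-q) : ℝ)

/-- The meromorphic continuation in `z` of `mellin (powerProfile q S) (2 - 2 * z)`. -/
noncomputable def powerProfileMellin (q S : ℝ) (z : ℂ) : ℂ :=
  (S : ℂ) ^ (2 * z - 2) * (Gamma (1 - z) * Gamma (q - 1 + z) / (2 * Gamma q))

variable {q S : ℝ}

theorem norm_powerProfile (q S u : ℝ) : ‖powerProfile q S u‖ = (1 + u ^ 2 * S ^ 2) ^ (-q) := by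
  rw [powerProfile, norm_real, Real.norm_of_nonneg (by positivity)]

theorem norm_powerProfile_le_one (hq : 0 ≤ q) (S u : ℝ) : ‖powerProfile q S u‖ ≤ 1 := by
  rw [norm_powerProfile]
  exact Real.rpow_le_one_of_one_le_of_nonpos (le_add_of_nonneg_right (by positivity))
    (neg_nonpos.2 hq)

theorem isBigO_powerProfile_atTop (hq : 0 ≤ q) (hS : 0 < S) :
    powerProfile q S =O[atTop] (· ^ (-(2 * q))) := by
  refine IsBigO.of_bound (S ^ (-(2 * q))) ?_
  filter_upwards [eventually_gt_atTop 0] with u hu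
  rw [norm_powerProfile, Real.norm_of_nonneg (by positivity)]
  calc (1 + u ^ 2 * S ^ 2) ^ (-q) ≤ ((S * u) ^ (2 : ℝ)) ^ (-q) := by
        refine Real.rpow_le_rpow_of_nonpos (by positivity) ?_ (neg_nonpos.2 hq)
        rw [Real.rpow_two]
        linarith
    _ = S ^ (-(2 * q)) * u ^ (-(2 * q)) := by
        rw [← Real.rpow_mul (by positivity), mul_neg, Real.mul_rpow hS.le hu.le]

theorem exists_isEvenProfile_powerProfile (hq : 1 < q) (hS : 0 < S) :
    ∃ a, IsEvenProfile (powerProfile q S) a := by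
  have hsmooth : ContDiffOn ℝ (⊤ : ℕ∞) (fun x : ℝ ↦ (1 + x * S ^ 2) ^ (-q)) (Ici 0) :=
    ContDiffOn.rpow_const_of_ne (by fun_prop) fun x (hx : 0 ≤ x) ↦ by positivity
  exact ⟨_, isEvenProfile_comp_sq (g := fun x ↦ (((1 + x * S ^ 2) ^ (-q) : ℝ) : ℂ))
    (ofRealCLM.contDiff.comp_contDiffOn hsmooth) (by linarith : 2 < 2 * q)
    (isBigO_powerProfile_atTop (by linarith) hS)⟩

theorem mellin_powerProfile (hS : 0 < S) {z : ℂ} (hz : 1 - q < z.re) (hz' : z.re < 1) :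
    mellin (powerProfile q S) (2 - 2 * z) = powerProfileMellin q S z := by
  set g : ℝ → ℂ := fun x ↦ ((1 + x : ℝ) : ℂ) ^ (-(q : ℂ))
  have hscale : powerProfile q S = fun u ↦ g ((S * u) ^ (2 : ℝ)) := by
    funext u
    simp only [powerProfile, g]
    rw [ofReal_cpow (by positivity), Real.rpow_two, mul_pow, mul_comm (u ^ 2), ofReal_neg]
  have hhalf : (2 - 2 * z) / (2 : ℝ) = 1 - z := by
    push_cast
    ring
  have hre : (1 - z).re < (q : ℂ).re := by
    rw [sub_re, one_re, ofReal_re]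
    linarith
  rw [hscale, mellin_comp_mul_left (fun x ↦ g (x ^ (2 : ℝ))) _ hS, mellin_comp_rpow, hhalf,
    mellin_one_add_cpow_neg (by simpa using hz') hre, powerProfileMellin,
    smul_eq_mul, real_smul, neg_sub, show (q : ℂ) - (1 - z) = q - 1 + z by ring, abs_two]
  push_cast
  ring

theorem meromorphic_powerProfileMellin (hS : 0 < S) : Meromorphic (powerProfileMellin q S) := by
  intro z
  have hpow : MeromorphicAt (fun z : ℂ ↦ (S : ℂ) ^ (2 * z - 2)) z :=
    ((by fun_prop (disch := simp [hS.ne']) :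
      Differentiable ℂ fun z : ℂ ↦ (S : ℂ) ^ (2 * z - 2)).analyticAt z).meromorphicAt
  have hGamma_sub : MeromorphicAt (fun z ↦ Gamma (1 - z)) z :=
    (Meromorphic.Gamma _).comp_analyticAt (g := fun z ↦ 1 - z) (by fun_prop)
  have hGamma_add : MeromorphicAt (fun z ↦ Gamma (q - 1 + z)) z :=
    (Meromorphic.Gamma _).comp_analyticAt (g := fun z ↦ (q : ℂ) - 1 + z) (by fun_prop)
  exact hpow.fun_mul ((hGamma_sub.fun_mul hGamma_add).fun_div (.const _ _))

theorem powerProfileMellin_zero (hq : 1 < q) :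
    powerProfileMellin q S 0 = 1 / (2 * (q - 1) * (S : ℂ) ^ 2) := by
  have hq0 : (q - 1 : ℂ) ≠ 0 := by exact_mod_cast (sub_pos.2 hq).ne'
  have hGamma : Gamma (q - 1 : ℂ) ≠ 0 := Gamma_ne_zero_of_re_pos (by simpa using hq)
  have hsucc : Gamma q = (q - 1) * Gamma (q - 1) := by simpa using Gamma_add_one _ hq0
  rw [powerProfileMellin, hsucc, mul_zero, zero_sub, cpow_neg, cpow_ofNat, sub_zero, add_zero,
    Gamma_one]
  field_simp

theorem ne_neg_natCast_of_re_pos {s : ℂ} (hs : 0 < s.re) (m : ℕ) : s ≠ -m := by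
  rintro rfl
  exact hs.not_ge (by simp)

theorem hasDerivAt_powerProfileMellin_zero (hq : 1 < q) (hS : 0 < S) :
    HasDerivAt (powerProfileMellin q S) (powerProfileMellin q S 0 *
      (2 * Real.log S + Real.eulerMascheroniConstant + digamma (q - 1))) 0 := by
  have hre : 0 < (q - 1 : ℂ).re := by simpa using hq
  have hpow : HasDerivAt (fun z : ℂ ↦ (S : ℂ) ^ (2 * z - 2))
      ((S : ℂ) ^ (2 * 0 - 2 : ℂ) * log S * (2 * 1)) 0 :=
    (((hasDerivAt_id _).const_mul 2).sub_const 2).const_cpow (.inl (ofReal_ne_zero.2 hS.ne'))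
  have hsub : HasDerivAt (fun z ↦ Gamma (1 - z)) (-(-Real.eulerMascheroniConstant) : ℂ) 0 :=
    HasDerivAt.comp_const_sub 1 0 (by simpa using hasDerivAt_Gamma_one)
  have hadd : HasDerivAt (fun z ↦ Gamma (q - 1 + z)) (Gamma (q - 1) * digamma (q - 1)) 0 := by
    refine HasDerivAt.comp_const_add _ 0 ?_
    rw [add_zero, digamma_def, logDeriv_apply, mul_div_cancel₀ _ (Gamma_ne_zero_of_re_pos hre)]
    exact (differentiableAt_Gamma _ (ne_neg_natCast_of_re_pos hre)).hasDerivAt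
  refine (hpow.mul ((hsub.mul hadd).div_const (2 * Gamma q))).congr_deriv ?_
  simp only [powerProfileMellin, Pi.mul_apply, sub_zero, add_zero, Gamma_one, ← ofReal_log hS.le]
  ring

theorem digamma_three_half :
    digamma (3 / 2) = 2 - 2 * Real.log 2 - Real.eulerMascheroniConstant := by
  have hsucc := digamma_apply_add_one (1 / 2) (ne_neg_natCast_of_re_pos (by norm_num))
  rw [digamma_one_half] at hsucc
  rw [show (3 / 2 : ℂ) = 1 / 2 + 1 by norm_num, hsucc, ofReal_log zero_le_two]
  push_cast
  ring

end PowerProfile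

section ConeSeries

/-- The factor `(5 - cosh² η) cosh η / 8`, so that `coneFactor η * sinh² η` is the constant in
front of `A₁`. -/
noncomputable def coneFactor (η : ℝ) : ℝ := (5 - Real.cosh η ^ 2) * Real.cosh η / 8

/-- The profile `(1 + u² sinh² η)^{-5/2}` of `A₁`. -/
noncomputable def coneProfile (η u : ℝ) : ℂ := powerProfile (5 / 2) (Real.sinh η) u

variable {ω : ℕ} {δ η : ℝ}

theorem coneA1_eq (η u : ℝ) :
    (coneA1 η u : ℂ) = coneFactor η * Real.sinh η ^ 2 * (u * coneProfile η u) := by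
  rw [coneA1, coneFactor, coneProfile, powerProfile, neg_div]
  push_cast
  ring

theorem integral_cpow_mul_coneA1 {b : ℝ} (hb : 0 ≤ b) (s : ℂ) :
    ∫ u in Ioi b, (u : ℂ) ^ (s - 2) * (coneA1 η u : ℂ) =
      coneFactor η * Real.sinh η ^ 2 * mellin ((Ioi b).indicator (coneProfile η)) s := by
  rw [mellin_indicator_Ioi_eq_setIntegral hb, ← integral_const_mul]
  refine setIntegral_congr_fun measurableSet_Ioi fun u hu ↦ ?_
  have hu0 : (u : ℂ) ≠ 0 := ofReal_ne_zero.2 (hb.trans_lt hu).ne'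
  rw [coneA1_eq, show s - 1 = s - 2 + 1 by ring, cpow_add _ _ hu0, cpow_one, smul_eq_mul]
  ring

theorem Omega1Term_succ_eq (ω : ℕ) (η δ : ℝ) (p : ℕ × ℕ) (s : ℂ) :
    Omega1Term ω η δ (p.1 + 1) p.2 s =
      coneFactor η * Real.sinh η ^ 2 * (2 * sin (Real.pi * s) / Real.pi) *
        shiftedTerm (tailTerm ω δ (coneProfile η)) 0 p s := by
  have hcut : ((p.1 + 1 : ℕ) : ℝ) ^ (δ - 1) / ω = cutoff ω δ p.1 := by
    rw [cutoff, Nat.cast_add_one]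
  have hcut0 : 0 ≤ cutoff ω δ p.1 := by
    rw [cutoff]
    positivity
  have hexp : -(2 * s) - 2 * (p.2 : ℂ) = 2 - 2 * (s + p.2) - 2 := by ring
  rw [Omega1Term, hcut, hexp, integral_cpow_mul_coneA1 hcut0, shiftedTerm, tailTerm, weight,
    pochCoeff, add_zero, Nat.cast_add_one, mul_add, add_assoc]
  ring_nf

theorem exists_isEvenProfile_coneProfile (hη : 0 < η) : ∃ a, IsEvenProfile (coneProfile η) a :=
  exists_isEvenProfile_powerProfile (by norm_num) (Real.sinh_pos_iff.2 hη)

theorem isNormallySummable_tailTerm_coneProfile (hω : 0 < ω) (hδ : 0 < δ) (hη : 0 < η) :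
    IsNormallySummable (tailTerm ω δ (coneProfile η)) :=
  let ⟨_, hf⟩ := exists_isEvenProfile_coneProfile hη
  hf.isNormallySummable_tailTerm (Nat.cast_pos.2 hω) hδ

theorem summable_norm_Omega1Term (hω : 0 < ω) (hδ : 0 < δ) (hη : 0 < η) {s : ℂ} (hs : 0 < s.re) :
    Summable fun p : ℕ × ℕ ↦ ‖Omega1Term ω η δ (p.1 + 1) p.2 s‖ := by
  simp only [Omega1Term_succ_eq, norm_mul _ (shiftedTerm _ _ _ _)]
  exact ((isNormallySummable_tailTerm_coneProfile hω hδ hη).summable_norm_shiftedTerm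
    (by simpa using hs)).mul_left _

theorem tendstoLocallyUniformlyOn_Omega1Term (hω : 0 < ω) (hδ : 0 < δ) (hη : 0 < η) :
    TendstoLocallyUniformlyOn
      (fun (N : Finset (ℕ × ℕ)) (s : ℂ) ↦ ∑ p ∈ N, Omega1Term ω η δ (p.1 + 1) p.2 s)
      (fun s : ℂ ↦ ∑' p : ℕ × ℕ, Omega1Term ω η δ (p.1 + 1) p.2 s) atTop {s : ℂ | 0 < s.re} := by
  simp only [Omega1Term_succ_eq]
  simpa using (isNormallySummable_tailTerm_coneProfile hω hδ
    hη).tendstoLocallyUniformlyOn_mul_shiftedTerm (J := 0) (by fun_prop)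

theorem exists_Omega1_continuation (hω : 0 < ω) (hδ0 : 0 < δ) (hδ1 : δ < 1) (hη : 0 < η) :
    ∃ F, Meromorphic F ∧
      EqOn F (fun s ↦ ∑' p : ℕ × ℕ, Omega1Term ω η δ (p.1 + 1) p.2 s) {s | 0 < s.re} ∧
      AnalyticAt ℂ F 0 ∧ F 0 = coneFactor η / (3 * ω) ∧
      deriv F 0 = 2 * coneFactor η * (Real.eulerMascheroniConstant + 1 - Real.log 2 - Real.log ω +
        Real.log (Real.sinh η)) / (3 * ω) -
        2 * (coneFactor η * Real.sinh η ^ 2 * headSum ω δ (coneProfile η) 0) := by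
  have hS : 0 < Real.sinh η := Real.sinh_pos_iff.2 hη
  obtain ⟨a, hf⟩ := exists_isEvenProfile_coneProfile hη
  obtain ⟨F, hF, hFsum, hFan, hF0, hF'⟩ := hf.exists_continuation_hasDerivAt_zero
    (Nat.cast_pos.2 hω) hδ0 hδ1 (meromorphic_powerProfileMellin hS)
    (fun z hz hz' ↦ mellin_powerProfile hS (by linarith) hz')
    (hasDerivAt_powerProfileMellin_zero (by norm_num) hS)
  set A : ℂ := coneFactor η * Real.sinh η ^ 2
  have hAM : A * powerProfileMellin (5 / 2) (Real.sinh η) 0 = coneFactor η / 3 := by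
    have hS0 : (Real.sinh η : ℂ) ≠ 0 := ofReal_ne_zero.2 hS.ne'
    rw [powerProfileMellin_zero (by norm_num)]
    have hq : ((5 / 2 : ℝ) : ℂ) - 1 = 3 / 2 := by norm_num
    simp only [A, hq]
    field_simp
  refine ⟨fun s ↦ A * F s, fun s ↦ (MeromorphicAt.const A s).fun_mul (hF s), fun s hs ↦ ?_,
    analyticAt_const.mul hFan, ?_, ?_⟩
  · simp only [Omega1Term_succ_eq, hFsum hs, tsum_mul_left, shiftedSum]
    ring
  · simp only [hF0, ofReal_natCast, ← mul_div_assoc, hAM, div_div]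
  · have hdigamma : digamma ((5 / 2 : ℝ) - 1) = 2 - 2 * Real.log 2 - Real.eulerMascheroniConstant :=
      by rw [← digamma_three_half]; norm_num
    rw [(hF'.const_mul A).deriv, hdigamma, ofReal_natCast]
    linear_combination (2 * (Real.eulerMascheroniConstant + 1 - Real.log 2 - Real.log ω +
        Real.log (Real.sinh η)) / ω : ℂ) * hAM

end ConeSeries

section SmallEta

theorem differentiable_coneFactor : Differentiable ℝ coneFactor := by
  unfold coneFactor
  fun_prop

theorem coneFactor_zero : coneFactor 0 = 1 / 2 := by
  norm_num [coneFactor]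

theorem tendsto_coneFactor : Tendsto coneFactor (𝓝[>] 0) (𝓝 (1 / 2)) :=
  coneFactor_zero ▸ (differentiable_coneFactor.continuous.tendsto 0).mono_left nhdsWithin_le_nhds

theorem tendsto_sub_mul_log_nhdsGT_zero {f : ℝ → ℝ} (hf : DifferentiableAt ℝ f 0) :
    Tendsto (fun x ↦ (f x - f 0) * Real.log x) (𝓝[>] 0) (𝓝 0) := by
  have hO : (fun x ↦ f x - f 0) =O[𝓝[>] 0] fun x : ℝ ↦ x := by
    simpa using hf.isBigO_sub.mono nhdsWithin_le_nhds
  have hlog : Tendsto (fun x : ℝ ↦ x * Real.log x) (𝓝[>] 0) (𝓝 0) := by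
    simpa [mul_comm] using tendsto_log_mul_rpow_nhdsGT_zero zero_lt_one
  exact (hO.mul (isBigO_refl _ _)).trans_tendsto hlog

theorem tendsto_log_sinh_sub_log :
    Tendsto (fun η ↦ Real.log (Real.sinh η) - Real.log η) (𝓝[>] 0) (𝓝 0) := by
  have hslope : Tendsto (slope Real.sinh 0) (𝓝[>] 0) (𝓝 1) := by
    simpa using (Real.hasDerivAt_sinh 0).tendsto_slope.mono_left
      (nhdsWithin_mono 0 fun x (hx : x ∈ Ioi 0) ↦ (mem_Ioi.1 hx).ne')
  have hlog := hslope.log one_ne_zero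
  rw [Real.log_one] at hlog
  refine hlog.congr' ?_
  filter_upwards [self_mem_nhdsWithin] with η (hη : 0 < η)
  rw [slope_def_field, Real.sinh_zero, sub_zero, sub_zero,
    Real.log_div (Real.sinh_pos_iff.2 hη).ne' hη.ne']

theorem tendsto_coneFactor_mul_log_sinh (L : ℝ) :
    Tendsto (fun η ↦ 2 * coneFactor η * (L + Real.log (Real.sinh η)) - (L + Real.log η))
      (𝓝[>] 0) (𝓝 0) := by
  have hconst := (tendsto_coneFactor.sub_const (1 / 2)).mul_const (2 * L)
  have hlog := (tendsto_sub_mul_log_nhdsGT_zero (differentiable_coneFactor 0)).const_mul 2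
  have hsinh := (tendsto_coneFactor.const_mul 2).mul tendsto_log_sinh_sub_log
  have hsum := (hconst.add hlog).add hsinh
  simp only [coneFactor_zero, sub_self, zero_mul, mul_zero, add_zero] at hsum
  refine hsum.congr fun η ↦ ?_
  ring

theorem exists_norm_headSum_coneProfile_le {ω δ : ℝ} (hω : 0 < ω) (hδ : δ < 1) :
    ∃ C, ∀ η, ‖headSum ω δ (coneProfile η) 0‖ ≤ C :=
  ⟨_, fun η ↦ norm_headSum_le (C := 1) (b := 0) hω hδ.le
    (fun u _ ↦ by simpa [coneProfile] using norm_powerProfile_le_one (by norm_num) (Real.sinh η) u)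
    (by simp) (by simpa using hδ)⟩

theorem tendsto_coneFactor_mul_headSum {ω δ : ℝ} (hω : 0 < ω) (hδ : δ < 1) :
    Tendsto (fun η ↦ coneFactor η * Real.sinh η ^ 2 * headSum ω δ (coneProfile η) 0 : ℝ → ℂ)
      (𝓝[>] 0) (𝓝 0) := by
  obtain ⟨C, hC⟩ := exists_norm_headSum_coneProfile_le hω hδ
  have hamp : Tendsto (fun η : ℝ ↦ (coneFactor η * Real.sinh η ^ 2 : ℂ)) (𝓝[>] 0) (𝓝 0) := by
    have hcont : Continuous fun η : ℝ ↦ (coneFactor η * Real.sinh η ^ 2 : ℂ) := by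
      have := differentiable_coneFactor.continuous
      fun_prop
    simpa using (hcont.tendsto 0).mono_left nhdsWithin_le_nhds
  exact hamp.zero_mul_isBoundedUnder_le (isBoundedUnder_of ⟨C, hC⟩)

end SmallEta

section SmallEtaLimits

variable {ω : ℕ} {δ : ℝ} {F : ℝ → ℂ → ℂ}

theorem tendsto_Omega1_zero (hF : ∀ η, 0 < η → F η 0 = coneFactor η / (3 * ω)) :
    Tendsto (fun η ↦ F η 0) (𝓝[>] 0) (𝓝 (1 / (6 * ω))) := by
  have hlim := ((continuous_ofReal.tendsto _).comp tendsto_coneFactor).div_const (3 * ω : ℂ)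
  have hval : ((1 / 2 : ℝ) : ℂ) / (3 * ω) = 1 / (6 * ω) := by
    push_cast
    ring
  rw [hval] at hlim
  exact hlim.congr' (eventually_mem_nhdsWithin.mono fun η hη ↦ (hF η hη).symm)

theorem tendsto_deriv_Omega1_zero_sub (hω : 0 < ω) (hδ : δ < 1)
    (hF : ∀ η, 0 < η → deriv (F η) 0 =
      2 * coneFactor η * (Real.eulerMascheroniConstant + 1 - Real.log 2 - Real.log ω +
        Real.log (Real.sinh η)) / (3 * ω) -
        2 * (coneFactor η * Real.sinh η ^ 2 * headSum ω δ (coneProfile η) 0)) :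
    Tendsto (fun η ↦ deriv (F η) 0 -
        (Real.eulerMascheroniConstant / (3 * ω) + 1 / (3 * ω) - Real.log 2 / (3 * ω) -
          Real.log ω / (3 * ω) + Real.log η / (3 * ω))) (𝓝[>] 0) (𝓝 0) := by
  have hmain := ((continuous_ofReal.tendsto _).comp (tendsto_coneFactor_mul_log_sinh
    (Real.eulerMascheroniConstant + 1 - Real.log 2 - Real.log ω))).div_const (3 * ω : ℂ)
  have hhead := (tendsto_coneFactor_mul_headSum (Nat.cast_pos.2 hω) hδ).const_mul 2
  have hlim := hmain.sub hhead
  rw [ofReal_zero, zero_div, mul_zero, sub_zero] at hlim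
  refine hlim.congr' (eventually_mem_nhdsWithin.mono fun η hη ↦ ?_)
  simp only [hF η hη, Function.comp_apply, ofReal_sub, ofReal_add, ofReal_mul,
    ofReal_one, ofReal_ofNat]
  ring

end SmallEtaLimits

theorem statement12_general (ω : ℕ) (hω : 1 ≤ ω) (δ : ℝ) (hδ0 : 0 < δ) (hδ1 : δ < 1) :
    ∃ F : ℝ → ℂ → ℂ,
      (∀ η : ℝ, 0 < η →
        (∀ s ∈ {s : ℂ | 0 < s.re},
          Summable (fun p : ℕ × ℕ ↦ ‖Omega1Term ω η δ (p.1 + 1) p.2 s‖)) ∧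
        TendstoLocallyUniformlyOn
          (fun (N : Finset (ℕ × ℕ)) (s : ℂ) ↦ ∑ p ∈ N, Omega1Term ω η δ (p.1 + 1) p.2 s)
          (fun s : ℂ ↦ ∑' p : ℕ × ℕ, Omega1Term ω η δ (p.1 + 1) p.2 s)
          atTop {s : ℂ | 0 < s.re} ∧
        MeromorphicOn (F η) univ ∧
        EqOn (F η) (fun s : ℂ ↦ ∑' p : ℕ × ℕ, Omega1Term ω η δ (p.1 + 1) p.2 s)
          {s : ℂ | 0 < s.re} ∧
        AnalyticAt ℂ (F η) 0) ∧
      Tendsto (fun η : ℝ ↦ F η 0) (𝓝[>] 0) (𝓝 (1 / (6 * (ω : ℂ)))) ∧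
      Tendsto
        (fun η : ℝ ↦ deriv (F η) 0 -
          ((Real.eulerMascheroniConstant : ℂ) / (3 * (ω : ℂ)) + 1 / (3 * (ω : ℂ)) -
            (Real.log 2 : ℂ) / (3 * (ω : ℂ)) - (Real.log ω : ℂ) / (3 * (ω : ℂ)) +
            (Real.log η : ℂ) / (3 * (ω : ℂ))))
        (𝓝[>] 0) (𝓝 0) := by
  choose! F hmer hsum han hzero hderiv using
    fun η (hη : 0 < η) ↦ exists_Omega1_continuation hω hδ0 hδ1 hη
  exact ⟨F, fun η hη ↦ ⟨fun s hs ↦ summable_norm_Omega1Term hω hδ0 hη hs,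
    tendstoLocallyUniformlyOn_Omega1Term hω hδ0 hη, fun s _ ↦ hmer η hη s, hsum η hη, han η hη⟩,
    tendsto_Omega1_zero hzero, tendsto_deriv_Omega1_zero_sub hω hδ1 hderiv⟩

/-- for fixed integer `ω ≥ 1` and `δ ∈ (0,1/8)`, for every `η > 0` the double
series `Ω₁(s)` converges absolutely and locally uniformly on the strip `1 < Re(s) < 2`, and its
sum extends to a meromorphic function on `ℂ` holomorphic at (a neighborhood of) `s = 0`;
moreover, as `η → 0⁺`, `Ω₁(0) → 1/(6ω)` and
`Ω₁'(0) - (γ/(3ω) + 1/(3ω) - log 2/(3ω) - log ω/(3ω) + log η/(3ω)) → 0`. -/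
theorem statement12 (ω : ℕ) (hω : 1 ≤ ω) (δ : ℝ) (hδ0 : 0 < δ) (hδ1 : δ < 1 / 8) :
    ∃ F : ℝ → ℂ → ℂ,
      (∀ η : ℝ, 0 < η →
        (∀ s ∈ {s : ℂ | 1 < s.re ∧ s.re < 2},
          Summable (fun p : ℕ × ℕ => ‖Omega1Term ω η δ (p.1 + 1) p.2 s‖)) ∧
        TendstoLocallyUniformlyOn
          (fun (N : Finset (ℕ × ℕ)) (s : ℂ) => ∑ p ∈ N, Omega1Term ω η δ (p.1 + 1) p.2 s)
          (fun s : ℂ => ∑' p : ℕ × ℕ, Omega1Term ω η δ (p.1 + 1) p.2 s)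
          atTop {s : ℂ | 1 < s.re ∧ s.re < 2} ∧
        MeromorphicOn (F η) Set.univ ∧
        Set.EqOn (F η) (fun s : ℂ => ∑' p : ℕ × ℕ, Omega1Term ω η δ (p.1 + 1) p.2 s)
          {s : ℂ | 1 < s.re ∧ s.re < 2} ∧
        AnalyticAt ℂ (F η) 0) ∧
      Tendsto (fun η : ℝ => F η 0) (nhdsWithin 0 (Set.Ioi 0))
        (nhds (1 / (6 * (ω : ℂ)))) ∧
      Tendsto
        (fun η : ℝ => deriv (F η) 0 -
          ((Real.eulerMascheroniConstant : ℂ) / (3 * (ω : ℂ)) + 1 / (3 * (ω : ℂ)) -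
            (Real.log 2 : ℂ) / (3 * (ω : ℂ)) - (Real.log ω : ℂ) / (3 * (ω : ℂ)) +
            (Real.log η : ℂ) / (3 * (ω : ℂ))))
        (nhdsWithin 0 (Set.Ioi 0)) (nhds 0) := by
  have hstrip : {s : ℂ | 1 < s.re ∧ s.re < 2} ⊆ {s | 0 < s.re} := fun s hs ↦ zero_lt_one.trans hs.1
  obtain ⟨F, hF, hlimits⟩ := statement12_general ω hω δ hδ0 (hδ1.trans (by norm_num))
  refine ⟨F, fun η hη ↦ ?_, hlimits⟩
  obtain ⟨hsummable, hunif, hmer, hsum, han⟩ := hF η hη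
  exact ⟨fun s hs ↦ hsummable s (hstrip hs), hunif.mono hstrip, hmer, hsum.mono hstrip, han⟩
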